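/- arXiv:1603.01710 — 4 statements merged into one kernel-verified Lean document; each statement's English description precedes it below -/
import Mathlib

section
/- The assignment a |-> (1 2), b |-> (2 3), c |-> (3 4), d |-> 1, e |-> 1, f |-> 1 extends to a well-defined group homomorphism psi from Theta to the symmetric group S_4 = Equiv.Perm (Fin 4) (i.e. these permutations satisfy all defining relations of Theta), and psi is surjective. -/
/-- Coxeter matrix of the string diagram [3,3,4,3,3] on generators a,b,c,d,e,f = 0..5. -/
def cox6 : Fin 6 → Fin 6 → ℕ := fun i j =>
  if i = j then 1
  else if (i : ℕ) + 1 = (j : ℕ) ∨ (j : ℕ) + 1 = (i : ℕ) then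
    (if ((i : ℕ) = 2 ∧ (j : ℕ) = 3) ∨ ((i : ℕ) = 3 ∧ (j : ℕ) = 2) then 4 else 3)
  else 2

def rels6 : Set (FreeGroup (Fin 6)) :=
  Set.range fun p : Fin 6 × Fin 6 => (FreeGroup.of p.1 * FreeGroup.of p.2) ^ cox6 p.1 p.2

/-- The Coxeter group of type [3,3,4,3,3]. -/
abbrev W : Type := PresentedGroup rels6

/-- The generators a,b,c,d,e,f of W, as w 0, ..., w 5. -/
def w (i : Fin 6) : W := PresentedGroup.of i

/-- sigma = d^(cb) = b*c*d*c*b. -/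
def sg : W := w 1 * w 2 * w 3 * w 2 * w 1
/-- tau = c^(de) = e*d*c*d*e. -/
def tu : W := w 4 * w 3 * w 2 * w 3 * w 4

/-- Theta: the quotient of W by the normal closure of (a σ τ)^4 and (f τ σ τ)^3. -/
abbrev Theta : Type :=
  W ⧸ Subgroup.normalClosure ({(w 0 * sg * tu) ^ 4, (w 5 * tu * sg * tu) ^ 3} : Set W)

/-- Images of the six generators in Theta. -/
def th (i : Fin 6) : Theta := QuotientGroup.mk (w i)

/-!
A homomorphism out of `W` that kills `d`, `e` and `f` sends `σ`, a conjugate of `d`, to `1`, and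
`τ = e d c d e` to the image of `c`. The relators of `Theta` then become `(a c) ^ 4` and
`(c * c) ^ 3`, both trivial because `a c` and `c` square to `1` already in `W`; so such a
homomorphism factors through `Theta`. Killing `d`, `e`, `f` leaves the Coxeter relations of type
`[3,3]` on `a`, `b`, `c`, which the adjacent transpositions generating `S_4` satisfy.
-/

theorem surjective_of_swap_castSucc_succ_mem_mrange {M : Type*} [Monoid M] {n : ℕ}
    {ψ : M →* Equiv.Perm (Fin (n + 1))}
    (h : ∀ i : Fin n, Equiv.swap i.castSucc i.succ ∈ MonoidHom.mrange ψ) :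
    Function.Surjective ψ := by
  rw [← MonoidHom.mrange_eq_top, eq_top_iff, ← Equiv.Perm.mclosure_swap_castSucc_succ n,
    Submonoid.closure_le]
  exact Set.range_subset_iff.mpr h

namespace W

theorem w_mul_w_pow_cox6 (i j : Fin 6) : (w i * w j) ^ cox6 i j = 1 := by
  simpa only [w, PresentedGroup.of, map_mul, map_pow] using
    PresentedGroup.one_of_mem (rels := rels6) ⟨(i, j), rfl⟩

theorem w_mul_self (i : Fin 6) : w i * w i = 1 := by
  simpa [cox6] using w_mul_w_pow_cox6 i i

section Lift

variable {G : Type*} [Group G] (g : Fin 6 → G) (hg : ∀ i j, (g i * g j) ^ cox6 i j = 1)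

/-- The universal property of `W`: a family satisfying the Coxeter relations extends to a
homomorphism. -/
def lift : W →* G :=
  PresentedGroup.toGroup (f := g) <| by
    rintro _ ⟨⟨i, j⟩, rfl⟩
    simpa only [map_pow, map_mul, FreeGroup.lift_apply_of] using hg i j

theorem lift_w (i : Fin 6) : lift g hg (w i) = g i :=
  PresentedGroup.toGroup.of _

end Lift

section KillingDEF

variable {M : Type*} [Monoid M] {φ : W →* M}

theorem map_w_mul_self (i : Fin 6) : φ (w i) * φ (w i) = 1 := by
  rw [← map_mul, w_mul_self, map_one]

theorem map_sg_eq_one (hd : φ (w 3) = 1) : φ sg = 1 :=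
  calc φ sg = φ (w 1) * (φ (w 2) * φ (w 2)) * φ (w 1) := by
        simp only [sg, map_mul, hd, one_mul, mul_assoc]
    _ = 1 := by rw [map_w_mul_self, mul_one, map_w_mul_self]

theorem map_tu_eq_map_w_two (hd : φ (w 3) = 1) (he : φ (w 4) = 1) : φ tu = φ (w 2) := by
  simp only [tu, map_mul, hd, he, one_mul, mul_one]

theorem normalClosure_relators_le_ker (hd : φ (w 3) = 1) (he : φ (w 4) = 1) (hf : φ (w 5) = 1) :
    Subgroup.normalClosure ({(w 0 * sg * tu) ^ 4, (w 5 * tu * sg * tu) ^ 3} : Set W) ≤ φ.ker := by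
  have hσ : φ sg = 1 := map_sg_eq_one hd
  have hτ : φ tu = φ (w 2) := map_tu_eq_map_w_two hd he
  have hac : (w 0 * w 2) ^ 2 = 1 := w_mul_w_pow_cox6 0 2
  apply Subgroup.normalClosure_le_normal
  rintro _ (rfl | rfl) <;> rw [SetLike.mem_coe, MonoidHom.mem_ker]
  · calc φ ((w 0 * sg * tu) ^ 4) = φ (((w 0 * w 2) ^ 2) ^ 2) := by
          rw [← pow_mul]
          simp only [map_pow, map_mul, hσ, hτ, mul_one]
      _ = 1 := by rw [hac, one_pow, map_one]
  · calc φ ((w 5 * tu * sg * tu) ^ 3) = (φ (w 2) * φ (w 2)) ^ 3 := by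
          simp only [map_pow, map_mul, hσ, hτ, hf, mul_one, one_mul]
      _ = 1 := by rw [map_w_mul_self, one_pow]

end KillingDEF

end W

/-- The homomorphism on `Theta` induced by one on `W` that kills `d`, `e` and `f`. -/
def Theta.lift {M : Type*} [Monoid M] (φ : W →* M)
    (hd : φ (w 3) = 1) (he : φ (w 4) = 1) (hf : φ (w 5) = 1) : Theta →* M :=
  QuotientGroup.lift _ φ (W.normalClosure_relators_le_ker hd he hf)

theorem Theta.lift_th {M : Type*} [Monoid M] (φ : W →* M)
    (hd : φ (w 3) = 1) (he : φ (w 4) = 1) (hf : φ (w 5) = 1) (i : Fin 6) :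
    Theta.lift φ hd he hf (th i) = φ (w i) :=
  QuotientGroup.lift_mk _ _ _

/-- The prescribed images in `S_4` of the generators `a, b, c, d, e, f`; the points `1, …, 4` are
encoded as `0, …, 3`. -/
def permGen : Fin 6 → Equiv.Perm (Fin 4) :=
  ![Equiv.swap 0 1, Equiv.swap 1 2, Equiv.swap 2 3, 1, 1, 1]

theorem permGen_mul_permGen_pow_cox6 : ∀ i j, (permGen i * permGen j) ^ cox6 i j = 1 := by
  decide

theorem swap_castSucc_succ_eq_permGen (i : Fin 3) :
    Equiv.swap i.castSucc i.succ = permGen (i.castAdd 3) := by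
  fin_cases i <;> rfl

/-- The assignment a ↦ (1 2), b ↦ (2 3), c ↦ (3 4), d,e,f ↦ 1 extends to a
well-defined surjective homomorphism psi : Theta → S_4. -/
theorem stmt_7 :
    ∃ ψ : Theta →* Equiv.Perm (Fin 4),
      ψ (th 0) = Equiv.swap 0 1 ∧ ψ (th 1) = Equiv.swap 1 2 ∧ ψ (th 2) = Equiv.swap 2 3 ∧
      ψ (th 3) = 1 ∧ ψ (th 4) = 1 ∧ ψ (th 5) = 1 ∧ Function.Surjective ψ := by
  let φ : W →* Equiv.Perm (Fin 4) := W.lift permGen permGen_mul_permGen_pow_cox6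
  have hφ (i : Fin 6) : φ (w i) = permGen i := W.lift_w _ _ i
  let ψ : Theta →* Equiv.Perm (Fin 4) := Theta.lift φ (hφ 3) (hφ 4) (hφ 5)
  have hψ (i : Fin 6) : ψ (th i) = permGen i := (Theta.lift_th _ _ _ _ i).trans (hφ i)
  refine ⟨ψ, hψ 0, hψ 1, hψ 2, hψ 3, hψ 4, hψ 5, ?_⟩
  refine surjective_of_swap_castSucc_succ_mem_mrange fun i => ⟨th (i.castAdd 3), ?_⟩
  rw [hψ, swap_castSucc_succ_eq_permGen]
end

section
/- The quotient group Theta' is finite, of order 2^18 * 3^2 (= 2359296). (Theta' is the automorphism group of the universal locally toroidal polytope {{3,3,4,3}_{(2,0,0,0)}, {3,4,3,3}_{(2,2,0,0)}}.) -/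
/-- Theta': the quotient of W by the normal closure of (a σ τ σ)^2,
forcing facets {3,3,4,3}_{(2,0,0,0)}. -/
abbrev Theta' : Type :=
  W ⧸ Subgroup.normalClosure ({(w 0 * sg * tu * sg) ^ 2} : Set W)

/-- Images of the six generators in Theta'. -/
def th' (i : Fin 6) : Theta' := QuotientGroup.mk (w i)

/-!
Let `D i` be the four conjugates of `d` under the subgroup `⟨a, b, c⟩`, a quotient of `S₄` that
normalizes the subgroup generated by the `D i`, `e` and `f`. The extra relator says that
`D 0 * D 1` commutes with the conjugate by `e` of `D 2 * D 3`. It follows that, for the family `D`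
and its conjugates by `e` and by `f * e`, the commutator of the products of two families along
adjacent edges of the index set does not depend on the edges, is central in the group generated by
the pair products of the three families, and squares to `1`. These pair products therefore generate
a group of order at most `8 ^ 3 * 2 ^ 3`, on top of which lie a quotient `⟨D 3, e, f⟩` of `S₄` and
`⟨a, b, c⟩`, for a total of `24 * 24 * 2 ^ 12`.

Nothing collapses: `Theta'` maps onto `S₄ × S₄`, the pair products in the kernel of this map yield
`2 ^ 9` sign changes of the cells of a `4 × 4` grid, and the three commutators, which act trivially
on the grid, act independently on the labellings of a diagram modulo `4`.
-/

namespace LocallyToroidal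

open Subgroup
open Equiv (Perm swap)

section CardBounds

variable {G : Type*} [Group G]

theorem enatCard_sup_le {H N : Subgroup G} (h : H ≤ normalizer N) :
    ENat.card (H ⊔ N : Subgroup G) ≤ ENat.card H * ENat.card N := by
  have surjective : Function.Surjective fun x : H × N =>
      (⟨x.1 * x.2, mul_mem_sup x.1.2 x.2.2⟩ : (H ⊔ N : Subgroup G)) := by
    rintro ⟨g, hg⟩
    rw [← SetLike.mem_coe, coe_mul_of_left_le_normalizer_right H N h] at hg
    obtain ⟨x, hx, y, hy, rfl⟩ := hg
    exact ⟨(⟨x, hx⟩, ⟨y, hy⟩), rfl⟩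
  rw [← ENat.card_prod]
  exact ENat.card_le_card_of_injective (Function.injective_surjInv surjective)

theorem enatCard_mono {H K : Subgroup G} (h : H ≤ K) : ENat.card H ≤ ENat.card K :=
  ENat.card_le_card_of_injective (inclusion_injective h)

theorem enatCard_zpowers_le {g : G} {n : ℕ} [NeZero n] (h : g ^ n = 1) :
    ENat.card (zpowers g) ≤ n := by
  have finite : Finite (zpowers g) :=
    (isOfFinOrder_iff_pow_eq_one.2 ⟨n, NeZero.pos n, h⟩).finite_zpowers
  rw [ENat.card_eq_coe_natCard, Nat.card_zpowers]
  exact_mod_cast Nat.le_of_dvd (NeZero.pos n) (orderOf_dvd_of_pow_eq_one h)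

theorem mem_normalizer_of_map_conj_le {g : G} (hg : g * g = 1) {N : Subgroup G}
    (h : N.map (MulAut.conj g).toMonoidHom ≤ N) : g ∈ normalizer (N : Set G) := by
  have conj_mem {x} (hx : x ∈ N) : g * x * g⁻¹ ∈ N := h (mem_map_of_mem _ hx)
  refine mem_normalizer_iff.2 fun x => ⟨conj_mem, fun hx => ?_⟩
  have conj_conj : g * (g * x * g⁻¹) * g⁻¹ = x := by
    rw [inv_eq_of_mul_eq_one_left hg]
    grind
  exact conj_conj ▸ conj_mem hx

theorem mem_normalizer_closure {g : G} (hg : g * g = 1) {S : Set G}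
    (h : ∀ s ∈ S, g * s * g ∈ closure S) : g ∈ normalizer (closure S : Set G) := by
  apply mem_normalizer_of_map_conj_le hg
  rw [MonoidHom.map_closure, closure_le]
  rintro _ ⟨s, hs, rfl⟩
  simpa [inv_eq_of_mul_eq_one_left hg] using h s hs

/-- The family of the conjugates `x * p i * x⁻¹`. -/
def conjFamily {ι : Type*} (x : G) (p : ι → G) (i : ι) : G :=
  x * p i * x⁻¹

/-- A family of pairwise commuting elements of order dividing two. -/
structure CommutingInvolutions {ι : Type*} (p : ι → G) : Prop where
  sq : ∀ i, p i * p i = 1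
  comm : ∀ i j, p i * p j = p j * p i

theorem commute_conjFamily {ι : Type*} {z : G} {p : ι → G} (x : G) {i j : ι}
    (h : Commute z (p i * p j)) :
    Commute (x * z * x⁻¹) (conjFamily x p i * conjFamily x p j) := by
  rw [conjFamily, conjFamily, conj_mul]
  exact h.conj x

namespace CommutingInvolutions

variable {ι : Type*} {p : ι → G}

theorem comp {κ : Type*} (hp : CommutingInvolutions p) (k : κ → ι) :
    CommutingInvolutions fun i => p (k i) where
  sq i := hp.sq (k i)
  comm i j := hp.comm (k i) (k j)

theorem conj (hp : CommutingInvolutions p) (x : G) : CommutingInvolutions (conjFamily x p) where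
  sq i := by rw [conjFamily, conj_mul, hp.sq, mul_one, mul_inv_cancel]
  comm i j := by rw [conjFamily, conjFamily, conj_mul, conj_mul, hp.comm]

theorem telescope (hp : CommutingInvolutions p) (i j k : ι) :
    p i * p j = p i * p k * (p k * p j) := by
  have := hp.sq k
  grind

theorem pairs (hp : CommutingInvolutions p) :
    CommutingInvolutions fun ij : ι × ι => p ij.1 * p ij.2 where
  sq ij := by
    have := hp.sq ij.1
    have := hp.sq ij.2
    have := hp.comm ij.1 ij.2
    grind
  comm ij kl := by
    have := hp.comm
    grind

theorem enatCard_closure_range_le {n : ℕ} {p : Fin n → G} (hp : CommutingInvolutions p) :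
    ENat.card (closure (Set.range p)) ≤ 2 ^ n := by
  induction n with
  | zero => simp [Set.range_eq_empty]
  | succ n ih =>
    have split : closure (Set.range p) = zpowers (p 0) ⊔ closure (Set.range (Fin.tail p)) := by
      rw [← Fin.cons_self_tail p, Fin.range_cons, Set.insert_eq, Subgroup.closure_union,
        zpowers_eq_closure]
      simp
    have normalizes : zpowers (p 0) ≤ normalizer (closure (Set.range (Fin.tail p))) := by
      rw [zpowers_le]
      apply mem_normalizer_closure (hp.sq 0)
      rintro _ ⟨i, rfl⟩
      rw [Fin.tail, hp.comm, mul_assoc, hp.sq, mul_one]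
      exact subset_closure ⟨i, rfl⟩
    calc ENat.card (closure (Set.range p))
        ≤ ENat.card (zpowers (p 0)) * ENat.card (closure (Set.range (Fin.tail p))) :=
          split ▸ enatCard_sup_le normalizes
      _ ≤ 2 * 2 ^ n := mul_le_mul' (enatCard_zpowers_le (n := 2) (pow_two (p 0) ▸ hp.sq 0))
          (ih (hp.comp Fin.succ))
      _ = 2 ^ (n + 1) := (pow_succ' 2 n).symm

end CommutingInvolutions

/-- The subgroup generated by the products of two members of a family. -/
def pairSubgroup {ι : Type*} (p : ι → G) : Subgroup G :=
  closure (Set.range fun ij : ι × ι => p ij.1 * p ij.2)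

theorem pair_mem_pairSubgroup {ι : Type*} (p : ι → G) (i j : ι) : p i * p j ∈ pairSubgroup p :=
  subset_closure ⟨(i, j), rfl⟩

theorem map_conj_pairSubgroup {ι : Type*} (x : G) (p : ι → G) :
    (pairSubgroup p).map (MulAut.conj x).toMonoidHom = pairSubgroup (conjFamily x p) := by
  rw [pairSubgroup, pairSubgroup, MonoidHom.map_closure, ← Set.range_comp]
  congr 2
  ext ij
  exact conj_mul.symm

theorem CommutingInvolutions.pairSubgroup_eq {n : ℕ} {p : Fin (n + 1) → G}
    (hp : CommutingInvolutions p) :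
    pairSubgroup p = closure (Set.range fun i : Fin n => p i.succ * p 0) := by
  set H := closure (Set.range fun i : Fin n => p i.succ * p 0)
  have mem (i : Fin (n + 1)) : p i * p 0 ∈ H := by
    rcases Fin.eq_zero_or_eq_succ i with rfl | ⟨i, rfl⟩
    · exact hp.sq 0 ▸ one_mem H
    · exact subset_closure ⟨i, rfl⟩
  refine le_antisymm ((closure_le _).2 ?_) (closure_mono ?_)
  · rintro _ ⟨⟨i, j⟩, rfl⟩
    change p i * p j ∈ H
    rw [hp.telescope i j 0, hp.comm 0 j]
    exact mul_mem (mem i) (mem j)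
  · rintro _ ⟨i, rfl⟩
    exact ⟨(i.succ, 0), rfl⟩

theorem CommutingInvolutions.enatCard_pairSubgroup_le {n : ℕ} {p : Fin (n + 1) → G}
    (hp : CommutingInvolutions p) : ENat.card (pairSubgroup p) ≤ 2 ^ n := by
  rw [hp.pairSubgroup_eq]
  exact (hp.pairs.comp fun i : Fin n => (i.succ, 0)).enatCard_closure_range_le

theorem enatCard_closure_pair_le {x y : G} (hx : x * x = 1) (hy : y * y = 1) {n : ℕ} [NeZero n]
    (hxy : (x * y) ^ n = 1) : ENat.card (closure {x, y}) ≤ 2 * n := by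
  have normalizes : zpowers x ≤ normalizer (zpowers (x * y) : Set G) := by
    rw [zpowers_le, zpowers_eq_closure]
    refine mem_normalizer_closure hx fun s hs => ?_
    have inv_xy : x * (x * y) * x = (x * y)⁻¹ := by
      rw [mul_inv_rev, inv_eq_of_mul_eq_one_left hx, inv_eq_of_mul_eq_one_left hy]; grind
    rw [Set.mem_singleton_iff.1 hs, inv_xy]
    exact inv_mem (subset_closure rfl)
  have le_sup : closure {x, y} ≤ zpowers x ⊔ zpowers (x * y) := by
    have x_mem : x ∈ zpowers x ⊔ zpowers (x * y) := mem_sup_left (mem_zpowers x)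
    have xy_mem : x * y ∈ zpowers x ⊔ zpowers (x * y) := mem_sup_right (mem_zpowers _)
    rw [closure_le, Set.insert_subset_iff, Set.singleton_subset_iff]
    exact ⟨x_mem, (mul_mem_cancel_left x_mem).1 xy_mem⟩
  calc ENat.card (closure {x, y})
      ≤ ENat.card (zpowers x) * ENat.card (zpowers (x * y)) :=
        (enatCard_mono le_sup).trans (enatCard_sup_le normalizes)
    _ ≤ 2 * n := mul_le_mul' (enatCard_zpowers_le (n := 2) (pow_two x ▸ hx))
        (enatCard_zpowers_le hxy)

-- The group has the shape of `S₄ = V₄ ⋊ S₃`, with `v` and `y * v * y` generating the Klein group.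
theorem enatCard_closure_triple_le {x y z : G} (hx : x * x = 1) (hy : y * y = 1) (hz : z * z = 1)
    (hxy : x * y * x = y * x * y) (hyz : y * z * y = z * y * z) (hxz : x * z = z * x) :
    ENat.card (closure {x, y, z}) ≤ 24 := by
  set v := x * z
  set V := closure {v, y * v * y}
  have v_mem : v ∈ V := subset_closure (by simp)
  have yvy_mem : y * v * y ∈ V := subset_closure (by simp)
  have x_normalizes : x ∈ normalizer (V : Set G) := by
    have conj_v : x * v * x = v := by grind
    have conj_yvy : x * (y * v * y) * x = y * v * y * v := by grind
    refine mem_normalizer_closure hx fun s hs => ?_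
    rcases hs with rfl | rfl
    · exact conj_v.symm ▸ v_mem
    · exact conj_yvy.symm ▸ mul_mem yvy_mem v_mem
  have y_normalizes : y ∈ normalizer (V : Set G) := by
    have conj_yvy : y * (y * v * y) * y = v := by grind
    refine mem_normalizer_closure hy fun s hs => ?_
    rcases hs with rfl | rfl
    · exact yvy_mem
    · exact conj_yvy.symm ▸ v_mem
  have normalizes : closure {x, y} ≤ normalizer (V : Set G) := by
    simpa [closure_le, Set.insert_subset_iff] using ⟨x_normalizes, y_normalizes⟩
  have le_sup : closure {x, y, z} ≤ closure {x, y} ⊔ V := by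
    have x_mem : x ∈ closure {x, y} ⊔ V := mem_sup_left (subset_closure (by simp))
    have y_mem : y ∈ closure {x, y} ⊔ V := mem_sup_left (subset_closure (by simp))
    have z_mem : z ∈ closure {x, y} ⊔ V := (mul_mem_cancel_left x_mem).1 (mem_sup_right v_mem)
    simpa [closure_le, Set.insert_subset_iff] using ⟨x_mem, y_mem, z_mem⟩
  have v_sq : v * v = 1 := by grind
  have yvy_sq : y * v * y * (y * v * y) = 1 := by grind
  calc ENat.card (closure {x, y, z})
      ≤ ENat.card (closure {x, y}) * ENat.card V :=
        (enatCard_mono le_sup).trans (enatCard_sup_le normalizes)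
    _ ≤ 2 * (3 : ℕ) * (2 * (2 : ℕ)) :=
        mul_le_mul' (enatCard_closure_pair_le hx hy (by rw [pow_three]; grind))
          (enatCard_closure_pair_le v_sq yvy_sq (by rw [pow_two]; grind))
    _ = 24 := by norm_num

end CardBounds

section LinkedFamilies

open scoped commutatorElement

theorem perm_fn_eq_of_adjacent_swaps {n : ℕ} {X : Type*} {F : Perm (Fin (n + 1)) → X}
    (h : ∀ (π : Perm (Fin (n + 1))) (i : Fin n), F (π * swap i.castSucc i.succ) = F π)
    (π : Perm (Fin (n + 1))) : F π = F 1 := by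
  have mem_closure : π ∈ Submonoid.closure (Set.range fun i : Fin n => swap i.castSucc i.succ) :=
    Perm.mclosure_swap_castSucc_succ n ▸ Submonoid.mem_top π
  induction mem_closure using Submonoid.closure_induction_right with
  | one => rfl
  | mul_right π _ s hs ih =>
    obtain ⟨i, rfl⟩ := hs
    rw [h, ih]

theorem exists_perm_three {i j k : Fin 4} (hij : i ≠ j) (hjk : j ≠ k) (hik : i ≠ k) :
    ∃ π : Perm (Fin 4), π 0 = i ∧ π 1 = j ∧ π 2 = k := by
  decide +revert +kernel

variable {G : Type*} [Group G]

theorem commutatorElement_mul_left_of_commute {g h y : G} (hy : Commute h y) :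
    ⁅g * h, y⁆ = ⁅g, y⁆ := by
  rw [commutatorElement_def, commutatorElement_def, mul_inv_rev, mul_assoc g h y, hy.eq]
  group

theorem commutatorElement_mul_right_of_commute {x y h : G} (hx : Commute x h) :
    ⁅x, y * h⁆ = ⁅x, y⁆ := by
  rw [commutatorElement_def, commutatorElement_def, mul_inv_rev, ← mul_assoc x y h,
    mul_assoc _ h x⁻¹, ← hx.inv_left.eq]
  group

theorem conj_commutatorElement {x : G} (hx : x * x = 1) (y : G) :
    x * ⁅x, y⁆ * x = ⁅x, y⁆⁻¹ := by
  have inv_x : x⁻¹ = x := inv_eq_of_mul_eq_one_left hx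
  calc x * ⁅x, y⁆ * x = x * x * (y * x * y⁻¹) * x⁻¹ := by
        rw [commutatorElement_def, inv_x]; group
    _ = ⁅x, y⁆⁻¹ := by rw [hx, one_mul, commutatorElement_inv, commutatorElement_def]

/-- Two families of commuting involutions such that the product of two members of the first
commutes with the product of two members of the second whenever their index pairs are equal or
disjoint. -/
structure LinkedFamilies (p q : Fin 4 → G) : Prop where
  left : CommutingInvolutions p
  right : CommutingInvolutions q
  same : ∀ i j, Commute (p i * p j) (q i * q j)
  disjoint : ∀ π : Perm (Fin 4), Commute (p (π 0) * p (π 1)) (q (π 2) * q (π 3))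

/-- The commutator of the products of `p` and of `q` along the consecutive edges `π 0 – π 1` and
`π 1 – π 2`. -/
def pathCommutator (p q : Fin 4 → G) (π : Perm (Fin 4)) : G :=
  ⁅p (π 0) * p (π 1), q (π 1) * q (π 2)⁆

/-- The common value of all path commutators of two linked families. -/
def linkCommutator (p q : Fin 4 → G) : G :=
  pathCommutator p q 1

theorem linkCommutator_conj (x : G) (p q : Fin 4 → G) :
    linkCommutator (conjFamily x p) (conjFamily x q) = x * linkCommutator p q * x⁻¹ := by
  simp only [linkCommutator, pathCommutator, conjFamily, conj_mul, conjugate_commutatorElement]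

theorem commute_linkCommutator {x : G} {p q : Fin 4 → G} (hp : ∀ i j, Commute x (p i * p j))
    (hq : ∀ i j, Commute x (q i * q j)) : Commute x (linkCommutator p q) :=
  (((hp _ _).mul_right (hq _ _)).mul_right (hp _ _).inv_right).mul_right (hq _ _).inv_right

namespace LinkedFamilies

variable {p q : Fin 4 → G}

theorem symm (h : LinkedFamilies p q) : LinkedFamilies q p where
  left := h.right
  right := h.left
  same i j := (h.same i j).symm
  disjoint π := (h.disjoint (π * (swap 0 2 * swap 1 3))).symm

theorem conj (h : LinkedFamilies p q) (x : G) :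
    LinkedFamilies (conjFamily x p) (conjFamily x q) where
  left := h.left.conj x
  right := h.right.conj x
  same i j := by
    simp only [conjFamily, conj_mul]
    exact (h.same i j).conj x
  disjoint π := by
    simp only [conjFamily, conj_mul]
    exact (h.disjoint π).conj x

-- The permutations of the indices are generated by the three moves below, each of which changes
-- one argument of the commutator by a factor commuting with the other argument.
theorem pathCommutator_eq (h : LinkedFamilies p q) (π : Perm (Fin 4)) :
    pathCommutator p q π = linkCommutator p q := by
  have swap_first_two (i j k : Fin 4) :
      ⁅p j * p i, q i * q k⁆ = ⁅p i * p j, q j * q k⁆ := by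
    rw [h.right.comm j, h.right.telescope k j i, h.right.comm k, h.left.comm j,
      commutatorElement_mul_right_of_commute (h.same i j)]
  have swap_last_two (i j k : Fin 4) :
      ⁅p i * p k, q k * q j⁆ = ⁅p i * p j, q j * q k⁆ := by
    rw [h.left.telescope i j k, h.right.comm j,
      commutatorElement_mul_left_of_commute (h.same k j)]
  have replace_last (i j k l : Fin 4) (hd : Commute (p i * p j) (q k * q l)) :
      ⁅p i * p j, q j * q l⁆ = ⁅p i * p j, q j * q k⁆ := by
    rw [h.right.telescope j l k, commutatorElement_mul_right_of_commute hd]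
  refine perm_fn_eq_of_adjacent_swaps (n := 3) (fun π => ?_) π
  simp only [Fin.forall_fin_succ, Fin.forall_fin_zero, and_true]
  exact ⟨swap_first_two _ _ _, swap_last_two _ _ _, replace_last _ _ _ _ (h.disjoint π)⟩

theorem commutator_eq (h : LinkedFamilies p q) {i j k : Fin 4} (hij : i ≠ j) (hjk : j ≠ k)
    (hik : i ≠ k) : ⁅p i * p j, q j * q k⁆ = linkCommutator p q := by
  obtain ⟨π, rfl, rfl, rfl⟩ := exists_perm_three hij hjk hik
  exact h.pathCommutator_eq π

theorem conj_linkCommutator (h : LinkedFamilies p q) {i j : Fin 4} (hij : i ≠ j) :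
    p i * p j * linkCommutator p q * (p i * p j) = (linkCommutator p q)⁻¹ := by
  obtain ⟨k, hik, hjk⟩ : ∃ k, i ≠ k ∧ j ≠ k := by decide +revert
  rw [← h.commutator_eq hij hjk hik]
  exact conj_commutatorElement (h.left.pairs.sq (i, j)) _

-- `p 0 * p 1`, `p 1 * p 2` and their product `p 0 * p 2` all invert the commutator.
theorem linkCommutator_inv (h : LinkedFamilies p q) :
    (linkCommutator p q)⁻¹ = linkCommutator p q := by
  have h01 := h.conj_linkCommutator (show (0 : Fin 4) ≠ 1 by decide)
  have h12 := h.conj_linkCommutator (show (1 : Fin 4) ≠ 2 by decide)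
  have h02 := h.conj_linkCommutator (show (0 : Fin 4) ≠ 2 by decide)
  rw [h.left.telescope 0 2 1] at h02
  have sq01 := h.left.pairs.sq (0, 1)
  have comm := h.left.pairs.comm (0, 1) (1, 2)
  generalize linkCommutator p q = z at *
  generalize p 0 * p 1 = x at *
  generalize p 1 * p 2 = y at *
  calc z⁻¹ = x * (y * z * y) * x := by rw [← h02]; nth_rw 2 [comm]; group
    _ = x * (x * z * x) * x := by rw [h12, h01]
    _ = z := by grind

theorem linkCommutator_symm (h : LinkedFamilies p q) :
    linkCommutator q p = linkCommutator p q :=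
  calc ⁅q 0 * q 1, p 1 * p 2⁆ = ⁅p 2 * p 1, q 1 * q 0⁆⁻¹ := by
        rw [commutatorElement_inv, h.left.comm 2, h.right.comm 1]
    _ = linkCommutator p q := by
        rw [h.commutator_eq (by decide) (by decide) (by decide), h.linkCommutator_inv]

theorem commute_left (h : LinkedFamilies p q) (i j : Fin 4) :
    Commute (linkCommutator p q) (p i * p j) := by
  rcases eq_or_ne i j with rfl | hij
  · exact h.left.sq i ▸ Commute.one_right _
  · have := h.left.pairs.sq (i, j)
    have := h.linkCommutator_inv ▸ h.conj_linkCommutator hij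
    rw [commute_iff_eq]
    grind

theorem commute_right (h : LinkedFamilies p q) (i j : Fin 4) :
    Commute (linkCommutator p q) (q i * q j) :=
  h.linkCommutator_symm ▸ h.symm.commute_left i j

theorem conj_pair_of_conj_pair (h : LinkedFamilies p q)
    (conj_q : ∀ i j, p j * (q i * q j) * (p j)⁻¹ = p i * p j * (q i * q j)) {i j l : Fin 4}
    (hij : i ≠ j) (hil : i ≠ l) (hjl : j ≠ l) :
    p l * (q i * q j) * (p l)⁻¹ = linkCommutator p q * (p i * p j * (q i * q j)) := by
  have link : ⁅q i * q l, p j * p l⁆ = linkCommutator p q := by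
    rw [h.left.comm j l, h.symm.commutator_eq hil hjl.symm hij, h.linkCommutator_symm]
  have commute := h.commute_left i l
  calc p l * (q i * q j) * (p l)⁻¹
      = p l * (q i * q l) * (p l)⁻¹ * (p l * (q j * q l) * (p l)⁻¹) := by
        rw [conj_mul, h.right.comm j l, ← h.right.telescope]
    _ = p i * p l * (q i * q l * (p j * p l)) * (q j * q l) := by
        rw [conj_q, conj_q]
        group
    _ = p i * p l * linkCommutator p q * (p j * p l) * (q i * q l * (q j * q l)) := by
        rw [← link, commutatorElement_def]
        group
    _ = linkCommutator p q * (p i * p l * (p j * p l)) * (q i * q l * (q j * q l)) := by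
        rw [← commute.eq]
        group
    _ = linkCommutator p q * (p i * p j * (q i * q j)) := by
        rw [h.left.comm j l, ← h.left.telescope, h.right.comm j l, ← h.right.telescope, mul_assoc]

-- Conjugating the relation between `q i * q j` and `r k * r l` by `p l` yields a relation
-- between `linkCommutator p q` and `r k * r l`.
theorem commute_third {r : Fin 4 → G} (hpq : LinkedFamilies p q) (hpr : LinkedFamilies p r)
    (hqr : LinkedFamilies q r)
    (conj_q : ∀ i j, p j * (q i * q j) * (p j)⁻¹ = p i * p j * (q i * q j))
    (conj_r : ∀ i j, p j * (r i * r j) * (p j)⁻¹ = p i * p j * (r i * r j)) (k l : Fin 4) :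
    Commute (linkCommutator p q) (r k * r l) := by
  rcases eq_or_ne k l with rfl | hkl
  · exact hpr.right.sq k ▸ Commute.one_right _
  obtain ⟨π, rfl, rfl⟩ : ∃ π : Perm (Fin 4), π 2 = k ∧ π 3 = l := by decide +revert +kernel
  have distinct (a b : Fin 4) (hab : a ≠ b) : π a ≠ π b := π.injective.ne hab
  have disjoint_p : Commute (p (π 0) * p (π 1)) (p (π 2) * p (π 3)) :=
    hpq.left.pairs.comm (π 0, π 1) (π 2, π 3)
  have relation : Commute (p (π 0) * p (π 1) * (q (π 0) * q (π 1)))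
      (p (π 2) * p (π 3) * (r (π 2) * r (π 3))) :=
    (disjoint_p.mul_right (hpr.disjoint π)).mul_left
      ((hpq.symm.disjoint π).mul_right (hqr.disjoint π))
  have conj_relation : Commute (linkCommutator p q * (p (π 0) * p (π 1) * (q (π 0) * q (π 1))))
      (p (π 2) * p (π 3) * (r (π 2) * r (π 3))) := by
    rw [← hpq.conj_pair_of_conj_pair conj_q (distinct 0 1 (by decide))
      (distinct 0 3 (by decide)) (distinct 1 3 (by decide)), ← conj_r]
    exact (hqr.disjoint π).conj _
  have commute_mul : Commute (linkCommutator p q) (p (π 2) * p (π 3) * (r (π 2) * r (π 3))) := by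
    simpa only [mul_inv_cancel_right] using conj_relation.mul_left relation.inv_left
  simpa only [inv_mul_cancel_left] using
    (hpq.commute_left (π 2) (π 3)).inv_right.mul_right commute_mul

end LinkedFamilies

theorem pairSubgroup_le_normalizer {n : ℕ} {p : Fin (n + 1) → G} (hp : CommutingInvolutions p)
    {N : Subgroup G}
    (h : ∀ i : Fin n, N.map (MulAut.conj (p i.succ * p 0)).toMonoidHom ≤ N) :
    pairSubgroup p ≤ normalizer (N : Set G) := by
  rw [hp.pairSubgroup_eq, closure_le]
  rintro _ ⟨i, rfl⟩
  exact mem_normalizer_of_map_conj_le (hp.pairs.sq (i.succ, 0)) (h i)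

theorem LinkedFamilies.map_conj_pairSubgroup_le {p q : Fin 4 → G} (h : LinkedFamilies p q)
    {N : Subgroup G} (link_mem : linkCommutator p q ∈ N) (hq : pairSubgroup q ≤ N) (i : Fin 3) :
    (pairSubgroup q).map (MulAut.conj (p i.succ * p 0)).toMonoidHom ≤ N := by
  rw [h.right.pairSubgroup_eq, MonoidHom.map_closure, closure_le]
  rintro _ ⟨_, ⟨k, rfl⟩, rfl⟩
  have pair_mem : q k.succ * q 0 ∈ N := hq (pair_mem_pairSubgroup q _ _)
  suffices ⁅p i.succ * p 0, q k.succ * q 0⁆ ∈ N by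
    have conj_mem := mul_mem this pair_mem
    rwa [commutatorElement_def, inv_mul_cancel_right] at conj_mem
  rcases eq_or_ne i k with rfl | hik
  · rw [commutatorElement_eq_one_iff_commute.2 (h.same i.succ 0)]
    exact one_mem N
  · rwa [h.right.comm, h.commutator_eq i.succ_ne_zero k.succ_ne_zero.symm (by simpa using hik)]

theorem map_conj_closure_le_of_commute {x : G} {S : Set G} (h : ∀ s ∈ S, Commute x s) :
    (closure S).map (MulAut.conj x).toMonoidHom ≤ closure S := by
  rw [MonoidHom.map_closure, closure_le]
  rintro _ ⟨s, hs, rfl⟩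
  have fixed : MulAut.conj x s = s := by rw [MulAut.conj_apply, (h s hs).eq, mul_inv_cancel_right]
  exact fixed.symm ▸ subset_closure hs

theorem map_conj_pairSubgroup_le_sup {ι : Type*} {p q : ι → G} (hq : CommutingInvolutions q) (j : ι)
    (conj_q : ∀ i, p j * (q i * q j) * (p j)⁻¹ = p i * p j * (q i * q j)) :
    (pairSubgroup q).map (MulAut.conj (p j)).toMonoidHom ≤ pairSubgroup p ⊔ pairSubgroup q := by
  have conj_mem (i) : p j * (q i * q j) * (p j)⁻¹ ∈ pairSubgroup p ⊔ pairSubgroup q :=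
    conj_q i ▸ mul_mem_sup (pair_mem_pairSubgroup p i j) (pair_mem_pairSubgroup q i j)
  rw [pairSubgroup, MonoidHom.map_closure, closure_le]
  rintro _ ⟨_, ⟨⟨i, k⟩, rfl⟩, rfl⟩
  change p j * (q i * q k) * (p j)⁻¹ ∈ pairSubgroup p ⊔ pairSubgroup q
  rw [hq.telescope i k j, hq.comm j k, ← conj_mul]
  exact mul_mem (conj_mem i) (conj_mem k)

/-- Three pairwise linked families, such that each of the three link commutators commutes with the
pair products of all of them. -/
structure LinkedTriple (p q r : Fin 4 → G) : Prop where
  fst_snd : LinkedFamilies p q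
  fst_trd : LinkedFamilies p r
  snd_trd : LinkedFamilies q r
  commute_trd : ∀ i j, Commute (linkCommutator p q) (r i * r j)
  commute_snd : ∀ i j, Commute (linkCommutator p r) (q i * q j)
  commute_fst : ∀ i j, Commute (linkCommutator q r) (p i * p j)

namespace LinkedTriple

/-- The three link commutators of a triple of families. -/
def links (p q r : Fin 4 → G) : Fin 3 → G :=
  ![linkCommutator p q, linkCommutator p r, linkCommutator q r]

variable {p q r : Fin 4 → G}

theorem commute_links_fst (h : LinkedTriple p q r) (i j : Fin 4) (k : Fin 3) :
    Commute (links p q r k) (p i * p j) := by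
  fin_cases k
  exacts [h.fst_snd.commute_left i j, h.fst_trd.commute_left i j, h.commute_fst i j]

theorem commute_links_snd (h : LinkedTriple p q r) (i j : Fin 4) (k : Fin 3) :
    Commute (links p q r k) (q i * q j) := by
  fin_cases k
  exacts [h.fst_snd.commute_right i j, h.commute_snd i j, h.snd_trd.commute_left i j]

theorem commute_links_trd (h : LinkedTriple p q r) (i j : Fin 4) (k : Fin 3) :
    Commute (links p q r k) (r i * r j) := by
  fin_cases k
  exacts [h.commute_trd i j, h.fst_trd.commute_right i j, h.snd_trd.commute_right i j]

theorem commutingInvolutions_links (h : LinkedTriple p q r) :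
    CommutingInvolutions (links p q r) where
  sq k := by
    rw [mul_eq_one_iff_eq_inv]
    fin_cases k
    exacts [h.fst_snd.linkCommutator_inv.symm, h.fst_trd.linkCommutator_inv.symm,
      h.snd_trd.linkCommutator_inv.symm]
  comm k l := by
    have commute_p (i j) := h.commute_links_fst i j k
    have commute_q (i j) := h.commute_links_snd i j k
    have commute_r (i j) := h.commute_links_trd i j k
    fin_cases l
    exacts [commute_linkCommutator commute_p commute_q, commute_linkCommutator commute_p commute_r,
      commute_linkCommutator commute_q commute_r]

theorem enatCard_le (h : LinkedTriple p q r) :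
    ENat.card (pairSubgroup p ⊔ (pairSubgroup q ⊔ pairSubgroup r) : Subgroup G) ≤ 8 ^ 4 := by
  set Z := closure (Set.range (links p q r))
  have link_mem (k) : links p q r k ∈ Z := subset_closure ⟨k, rfl⟩
  have map_Z_le {x : G} (hx : ∀ k, Commute (links p q r k) x) :
      Z.map (MulAut.conj x).toMonoidHom ≤ Z :=
    map_conj_closure_le_of_commute (Set.forall_mem_range.2 fun k => (hx k).symm)
  have r_normalizes : pairSubgroup r ≤ normalizer (Z : Set G) :=
    pairSubgroup_le_normalizer h.fst_trd.right fun i => map_Z_le (h.commute_links_trd _ _)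
  have q_normalizes : pairSubgroup q ≤ normalizer (pairSubgroup r ⊔ Z : Subgroup G) := by
    refine pairSubgroup_le_normalizer h.snd_trd.left fun i => ?_
    rw [Subgroup.map_sup]
    exact sup_le (h.snd_trd.map_conj_pairSubgroup_le (mem_sup_right (link_mem 2)) le_sup_left i)
      ((map_Z_le (h.commute_links_snd _ _)).trans le_sup_right)
  have p_normalizes :
      pairSubgroup p ≤ normalizer (pairSubgroup q ⊔ (pairSubgroup r ⊔ Z) : Subgroup G) := by
    refine pairSubgroup_le_normalizer h.fst_snd.left fun i => ?_
    have Z_le : Z ≤ pairSubgroup q ⊔ (pairSubgroup r ⊔ Z) := le_sup_right.trans le_sup_right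
    rw [Subgroup.map_sup, Subgroup.map_sup]
    exact sup_le (h.fst_snd.map_conj_pairSubgroup_le (Z_le (link_mem 0)) le_sup_left i)
      (sup_le (h.fst_trd.map_conj_pairSubgroup_le (Z_le (link_mem 1))
        (le_sup_left.trans le_sup_right) i) ((map_Z_le (h.commute_links_fst _ _)).trans Z_le))
  calc ENat.card (pairSubgroup p ⊔ (pairSubgroup q ⊔ pairSubgroup r) : Subgroup G)
      ≤ ENat.card (pairSubgroup p ⊔ (pairSubgroup q ⊔ (pairSubgroup r ⊔ Z)) : Subgroup G) :=
        enatCard_mono (sup_le_sup_left (sup_le_sup_left le_sup_left _) _)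
    _ ≤ 2 ^ 3 * (2 ^ 3 * (2 ^ 3 * 2 ^ 3)) :=
        (enatCard_sup_le p_normalizes).trans <|
        mul_le_mul' h.fst_snd.left.enatCard_pairSubgroup_le <|
        (enatCard_sup_le q_normalizes).trans <|
        mul_le_mul' h.snd_trd.left.enatCard_pairSubgroup_le <|
        (enatCard_sup_le r_normalizes).trans <|
        mul_le_mul' h.fst_trd.right.enatCard_pairSubgroup_le <|
        h.commutingInvolutions_links.enatCard_closure_range_le
    _ = 8 ^ 4 := by norm_num

end LinkedTriple

end LinkedFamilies

section StarRelations

variable {G : Type*} [Group G]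

/-- Relations between the images of the eight generators `D 0, …, D 3, e, f` of the Coxeter group
whose diagram joins `e` to `f` and to the four nodes `D i`, together with the relations saying that
the product of two of the `D i` commutes with the conjugate by `e` of the product of the other
two. -/
structure StarRelations (D : Fin 4 → G) (e f : G) : Prop where
  leaves : CommutingInvolutions D
  e_sq : e * e = 1
  f_sq : f * f = 1
  braid_leaf : ∀ i, e * D i * e = D i * e * D i
  braid : e * f * e = f * e * f
  comm_leaf : ∀ i, f * D i = D i * f
  disjoint : ∀ π : Perm (Fin 4),
    Commute (D (π 0) * D (π 1)) (conjFamily e D (π 2) * conjFamily e D (π 3))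

namespace StarRelations

variable {D : Fin 4 → G} {e f : G}

theorem e_inv (h : StarRelations D e f) : e⁻¹ = e := inv_eq_of_mul_eq_one_left h.e_sq

theorem f_inv (h : StarRelations D e f) : f⁻¹ = f := inv_eq_of_mul_eq_one_left h.f_sq

theorem leaf_inv (h : StarRelations D e f) (i : Fin 4) : (D i)⁻¹ = D i :=
  inv_eq_of_mul_eq_one_left (h.leaves.sq i)

theorem conjFamily_f_leaf (h : StarRelations D e f) : conjFamily f D = D := by
  ext i
  rw [conjFamily, h.comm_leaf, mul_inv_cancel_right]

theorem conjFamily_e_conjFamily_e (h : StarRelations D e f) :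
    conjFamily e (conjFamily e D) = D := by
  ext i
  have := h.e_sq
  rw [conjFamily, conjFamily, h.e_inv]
  grind

theorem conjFamily_f_conjFamily_f (h : StarRelations D e f) :
    conjFamily f (conjFamily f (conjFamily e D)) = conjFamily e D := by
  ext i
  have := h.f_sq
  rw [conjFamily, conjFamily, h.f_inv]
  grind

theorem conjFamily_e_conjFamily_f (h : StarRelations D e f) :
    conjFamily e (conjFamily f (conjFamily e D)) = conjFamily f (conjFamily e D) := by
  ext i
  have := h.f_sq
  have := h.braid
  have := h.comm_leaf i
  simp only [conjFamily, h.f_inv, h.e_inv]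
  grind

theorem conj_leaf_pair (h : StarRelations D e f) (i j : Fin 4) :
    D j * (conjFamily e D i * conjFamily e D j) * (D j)⁻¹ =
      D i * D j * (conjFamily e D i * conjFamily e D j) := by
  have := h.e_sq
  have := h.leaves.sq j
  have := h.leaves.comm i j
  have := h.braid_leaf i
  have := h.braid_leaf j
  simp only [conjFamily, h.e_inv, h.leaf_inv]
  grind

theorem linked_leaf_e (h : StarRelations D e f) : LinkedFamilies D (conjFamily e D) where
  left := h.leaves
  right := h.leaves.conj e
  same i j := by
    have leaf_sq := h.leaves.sq j
    have pair_sq := h.leaves.pairs.sq (i, j)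
    have conj_pair_sq := (h.leaves.conj e).pairs.sq (i, j)
    have conj_pair := h.leaf_inv j ▸ h.conj_leaf_pair i j
    rw [commute_iff_eq]
    generalize conjFamily e D i * conjFamily e D j = u at *
    generalize D i * D j = t at *
    grind
  disjoint := h.disjoint

theorem linked_leaf_fe (h : StarRelations D e f) :
    LinkedFamilies D (conjFamily f (conjFamily e D)) := by
  simpa only [h.conjFamily_f_leaf] using h.linked_leaf_e.conj f

theorem linked_e_fe (h : StarRelations D e f) :
    LinkedFamilies (conjFamily e D) (conjFamily f (conjFamily e D)) := by
  simpa only [h.conjFamily_e_conjFamily_f] using h.linked_leaf_fe.conj e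

theorem conj_leaf_pair_fe (h : StarRelations D e f) (i j : Fin 4) :
    D j * (conjFamily f (conjFamily e D) i * conjFamily f (conjFamily e D) j) * (D j)⁻¹ =
      D i * D j * (conjFamily f (conjFamily e D) i * conjFamily f (conjFamily e D) j) := by
  have fixed (i) : conjFamily f D i = D i := congrFun h.conjFamily_f_leaf i
  have conj_f := congrArg (MulAut.conj f) (h.conj_leaf_pair i j)
  simp only [map_mul, map_inv] at conj_f
  rw [← fixed i, ← fixed j]
  exact conj_f

theorem linkedTriple (h : StarRelations D e f) :
    LinkedTriple D (conjFamily e D) (conjFamily f (conjFamily e D)) := by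
  have link_fe : linkCommutator D (conjFamily f (conjFamily e D)) =
      f * linkCommutator D (conjFamily e D) * f⁻¹ := by
    rw [← linkCommutator_conj, h.conjFamily_f_leaf]
  have link_e_fe : linkCommutator (conjFamily e D) (conjFamily f (conjFamily e D)) =
      e * linkCommutator D (conjFamily f (conjFamily e D)) * e⁻¹ := by
    rw [← linkCommutator_conj, h.conjFamily_e_conjFamily_f]
  have commute_fe := h.linked_leaf_e.commute_third h.linked_leaf_fe h.linked_e_fe
    h.conj_leaf_pair h.conj_leaf_pair_fe
  have commute_e (i j) := h.conjFamily_f_conjFamily_f ▸ commute_conjFamily f (commute_fe i j)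
  have commute_leaf (i j) := h.conjFamily_e_conjFamily_e ▸ commute_conjFamily e (commute_e i j)
  rw [← link_fe] at commute_e
  rw [← link_fe, ← link_e_fe] at commute_leaf
  exact ⟨h.linked_leaf_e, h.linked_leaf_fe, h.linked_e_fe, commute_fe, commute_e, commute_leaf⟩

/-- The subgroup generated by the pair products of the families `D`, `e D e` and `f e D e f`. -/
def core (D : Fin 4 → G) (e f : G) : Subgroup G :=
  pairSubgroup D ⊔ (pairSubgroup (conjFamily e D) ⊔ pairSubgroup (conjFamily f (conjFamily e D)))

theorem e_mem_normalizer_core (h : StarRelations D e f) : e ∈ normalizer (core D e f : Set G) := by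
  apply mem_normalizer_of_map_conj_le h.e_sq
  rw [core, Subgroup.map_sup, Subgroup.map_sup, map_conj_pairSubgroup, map_conj_pairSubgroup,
    map_conj_pairSubgroup, h.conjFamily_e_conjFamily_e, h.conjFamily_e_conjFamily_f, sup_left_comm]

theorem f_mem_normalizer_core (h : StarRelations D e f) : f ∈ normalizer (core D e f : Set G) := by
  apply mem_normalizer_of_map_conj_le h.f_sq
  rw [core, Subgroup.map_sup, Subgroup.map_sup, map_conj_pairSubgroup, map_conj_pairSubgroup,
    map_conj_pairSubgroup, h.conjFamily_f_leaf, h.conjFamily_f_conjFamily_f,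
    sup_comm (pairSubgroup (conjFamily e D))]

theorem leaf_mem_normalizer_core (h : StarRelations D e f) (j : Fin 4) :
    D j ∈ normalizer (core D e f : Set G) := by
  have fixed : conjFamily (D j) D = D := by
    ext i
    rw [conjFamily, h.leaves.comm, mul_inv_cancel_right]
  apply mem_normalizer_of_map_conj_le (h.leaves.sq j)
  rw [core, Subgroup.map_sup, Subgroup.map_sup, map_conj_pairSubgroup, fixed]
  refine sup_le le_sup_left (sup_le ?_ ?_)
  · exact (map_conj_pairSubgroup_le_sup (h.leaves.conj e) j (h.conj_leaf_pair · j)).trans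
      (sup_le_sup_left le_sup_left _)
  · exact (map_conj_pairSubgroup_le_sup ((h.leaves.conj e).conj f) j
      (h.conj_leaf_pair_fe · j)).trans (sup_le_sup_left le_sup_right _)

theorem enatCard_closure_le (h : StarRelations D e f) :
    ENat.card (closure (Set.range D ∪ {e, f})) ≤ 24 * 8 ^ 4 := by
  have normalizes : closure {D 3, e, f} ≤ normalizer (core D e f : Set G) := by
    rw [closure_le]
    rintro _ (rfl | rfl | rfl)
    exacts [h.leaf_mem_normalizer_core 3, h.e_mem_normalizer_core, h.f_mem_normalizer_core]
  have le_sup : closure (Set.range D ∪ {e, f}) ≤ closure {D 3, e, f} ⊔ core D e f := by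
    rw [closure_le]
    rintro _ (⟨i, rfl⟩ | rfl | rfl)
    · have pair_mem : D i * D 3 ∈ core D e f := mem_sup_left (pair_mem_pairSubgroup D i 3)
      have leaf_mem : D 3 ∈ closure {D 3, e, f} := subset_closure (by simp)
      exact (mul_mem_cancel_right (mem_sup_left leaf_mem)).1 (mem_sup_right pair_mem)
    · exact mem_sup_left (subset_closure (by simp))
    · exact mem_sup_left (subset_closure (by simp))
  calc ENat.card (closure (Set.range D ∪ {e, f}))
      ≤ ENat.card (closure {D 3, e, f}) * ENat.card (core D e f) :=
        (enatCard_mono le_sup).trans (enatCard_sup_le normalizes)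
    _ ≤ 24 * 8 ^ 4 := mul_le_mul' (enatCard_closure_triple_le (h.leaves.sq 3) h.e_sq h.f_sq
        (h.braid_leaf 3).symm h.braid (h.comm_leaf 3).symm) h.linkedTriple.enatCard_le

end StarRelations

end StarRelations

section Star

variable {G H : Type*} [Group G] [Group H]

/-- The square of `a σ τ σ`, as a word in six elements `a, b, c, d, e, f` of any group. -/
def toroidalRelator (g : Fin 6 → G) : G :=
  (g 0 * (g 1 * g 2 * g 3 * g 2 * g 1) * (g 4 * g 3 * g 2 * g 3 * g 4) *
    (g 1 * g 2 * g 3 * g 2 * g 1)) ^ 2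

/-- The conjugates of the fourth of six elements by products of the first three: if the elements
satisfy the Coxeter relations of the diagram `[3,3,4,3,3]`, these are all its conjugates under the
subgroup generated by the first three. -/
def leaf (g : Fin 6 → G) : Fin 4 → G :=
  ![g 0 * g 1 * g 2 * g 3 * g 2 * g 1 * g 0, g 1 * g 2 * g 3 * g 2 * g 1, g 2 * g 3 * g 2, g 3]

/-- The family `leaf g` and its conjugates by `e` and by `f e`, where `e = g 4` and `f = g 5`. -/
def leafConj (g : Fin 6 → G) : Fin 3 → Fin 4 → G :=
  ![leaf g, conjFamily (g 4) (leaf g), conjFamily (g 5) (conjFamily (g 4) (leaf g))]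

/-- The nine products, each of a leaf and the last leaf, or of their conjugates by `e` or by `f e`:
the second index selects the conjugate. -/
def leafPair (g : Fin 6 → G) (ik : Fin 3 × Fin 3) : G :=
  leafConj g ik.2 ik.1.castSucc * leafConj g ik.2 3

/-- The three link commutators between the leaves and their conjugates by `e` and by `f e`. -/
def leafLinks (g : Fin 6 → G) : Fin 3 → G :=
  LinkedTriple.links (leafConj g 0) (leafConj g 1) (leafConj g 2)

theorem map_leafConj (φ : G →* H) (g : Fin 6 → G) (k : Fin 3) (i : Fin 4) :
    φ (leafConj g k i) = leafConj (φ ∘ g) k i := by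
  have map_leaf (i) : φ (leaf g i) = leaf (φ ∘ g) i := by
    fin_cases i <;> simp [leaf]
  fin_cases k <;> simp [leafConj, conjFamily, map_leaf]

theorem map_leafPair (φ : G →* H) (g : Fin 6 → G) (ik : Fin 3 × Fin 3) :
    φ (leafPair g ik) = leafPair (φ ∘ g) ik := by
  simp only [leafPair, map_mul, map_leafConj]

theorem map_leafLinks (φ : G →* H) (g : Fin 6 → G) (k : Fin 3) :
    φ (leafLinks g k) = leafLinks (φ ∘ g) k := by
  fin_cases k <;>
    simp [leafLinks, LinkedTriple.links, linkCommutator, pathCommutator, map_commutatorElement,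
      map_leafConj]

end Star

section UpperBound

theorem th'_pow_cox6 (i j : Fin 6) : (th' i * th' j) ^ cox6 i j = 1 := by
  have relation : (w i * w j) ^ cox6 i j = 1 := PresentedGroup.one_of_mem ⟨(i, j), rfl⟩
  exact congrArg (QuotientGroup.mk' _) relation

theorem toroidalRelator_th' : toroidalRelator th' = 1 :=
  (QuotientGroup.eq_one_iff ((w 0 * sg * tu * sg) ^ 2)).2 (subset_normalClosure rfl)

theorem th'_mul_self (i : Fin 6) : th' i * th' i = 1 := by
  simpa [cox6] using th'_pow_cox6 i i

theorem th'_inv (i : Fin 6) : (th' i)⁻¹ = th' i :=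
  inv_eq_of_mul_eq_one_left (th'_mul_self i)

theorem th'_comm {i j : Fin 6} (h : cox6 i j = 2) : th' i * th' j = th' j * th' i := by
  have relation := th'_pow_cox6 i j
  have := th'_mul_self i
  have := th'_mul_self j
  rw [h, pow_two] at relation
  grind

theorem th'_conj {i j : Fin 6} (h : cox6 i j = 2) : th' i * th' j * th' i = th' j := by
  rw [th'_comm h, mul_assoc (th' j), th'_mul_self, mul_one]

theorem th'_braid {i j : Fin 6} (h : cox6 i j = 3) :
    th' i * th' j * th' i = th' j * th' i * th' j := by
  have relation := th'_pow_cox6 i j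
  have := th'_mul_self i
  have := th'_mul_self j
  rw [h, pow_three] at relation
  grind

theorem closure_range_th' : closure (Set.range th') = ⊤ := by
  have range_eq : Set.range th' = QuotientGroup.mk' _ '' Set.range w := Set.range_comp _ w
  rw [range_eq, ← MonoidHom.map_closure,
    show closure (Set.range w) = ⊤ from PresentedGroup.closure_range_of rels6]
  exact map_top_of_surjective _ (QuotientGroup.mk'_surjective _)

theorem conj_leaf (i : Fin 3) (j : Fin 4) :
    th' (i.castLE (by decide)) * leaf th' j * th' (i.castLE (by decide)) =
      leaf th' (swap i.castSucc i.succ j) := by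
  have := th'_mul_self 0
  have := th'_mul_self 1
  have := th'_mul_self 2
  have := th'_braid (show cox6 0 1 = 3 by decide)
  have := th'_braid (show cox6 1 2 = 3 by decide)
  have := th'_comm (show cox6 0 2 = 2 by decide)
  have := th'_comm (show cox6 0 3 = 2 by decide)
  have := th'_comm (show cox6 1 3 = 2 by decide)
  fin_cases i <;> fin_cases j <;> simp [leaf, Equiv.swap_apply_def] <;> grind

theorem exists_mulAut_leaf (π : Perm (Fin 4)) :
    ∃ φ : MulAut Theta', φ (th' 4) = th' 4 ∧ φ (th' 5) = th' 5 ∧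
      ∀ i, φ (leaf th' i) = leaf th' (π i) := by
  have mem_closure : π ∈ Submonoid.closure (Set.range fun i : Fin 3 => swap i.castSucc i.succ) :=
    Equiv.Perm.mclosure_swap_castSucc_succ 3 ▸ Submonoid.mem_top π
  induction mem_closure using Submonoid.closure_induction_left with
  | one => exact ⟨1, rfl, rfl, fun _ => rfl⟩
  | mul_left s hs π _ ih =>
    obtain ⟨i, rfl⟩ := hs
    obtain ⟨φ, hφe, hφf, hφ⟩ := ih
    refine ⟨MulAut.conj (th' (i.castLE (by decide))) * φ, ?_, ?_, fun j => ?_⟩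
    · rw [MulAut.mul_apply, hφe, MulAut.conj_apply, th'_inv]
      exact th'_conj (by decide +revert)
    · rw [MulAut.mul_apply, hφf, MulAut.conj_apply, th'_inv]
      exact th'_conj (by decide +revert)
    · rw [MulAut.mul_apply, hφ, MulAut.conj_apply, th'_inv, conj_leaf, Equiv.Perm.mul_apply]

theorem commute_leaf (i j : Fin 4) : Commute (leaf th' i) (leaf th' j) := by
  rcases eq_or_ne i j with rfl | hij
  · rfl
  have commute_two_three : Commute (leaf th' 2) (leaf th' 3) := by
    have cd_pow := th'_pow_cox6 2 3
    have := th'_mul_self 2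
    have := th'_mul_self 3
    rw [show cox6 2 3 = 2 * 2 by decide, pow_mul, pow_two (th' 2 * th' 3),
      pow_two (th' 2 * th' 3 * (th' 2 * th' 3))] at cd_pow
    change th' 2 * th' 3 * th' 2 * th' 3 = th' 3 * (th' 2 * th' 3 * th' 2)
    grind
  obtain ⟨π, rfl, rfl⟩ : ∃ π : Perm (Fin 4), π 2 = i ∧ π 3 = j := by decide +revert +kernel
  obtain ⟨φ, -, -, hφ⟩ := exists_mulAut_leaf π
  simpa only [hφ] using commute_two_three.map φ

theorem braid_leaf (i : Fin 4) : th' 4 * leaf th' i * th' 4 = leaf th' i * th' 4 * leaf th' i := by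
  obtain ⟨φ, hφe, -, hφ⟩ := exists_mulAut_leaf (swap 3 i)
  have braid : th' 4 * leaf th' 3 * th' 4 = leaf th' 3 * th' 4 * leaf th' 3 :=
    th'_braid (show cox6 4 3 = 3 by decide)
  simpa only [map_mul, hφe, hφ, Equiv.swap_apply_left] using congrArg φ braid

theorem th'_five_comm_leaf (i : Fin 4) : th' 5 * leaf th' i = leaf th' i * th' 5 := by
  obtain ⟨φ, -, hφf, hφ⟩ := exists_mulAut_leaf (swap 3 i)
  have comm : th' 5 * leaf th' 3 = leaf th' 3 * th' 5 := th'_comm (show cox6 5 3 = 2 by decide)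
  simpa only [map_mul, hφf, hφ, Equiv.swap_apply_left] using congrArg φ comm

theorem leaf_mul_self (i : Fin 4) : leaf th' i * leaf th' i = 1 := by
  obtain ⟨φ, -, -, hφ⟩ := exists_mulAut_leaf (swap 3 i)
  have square : leaf th' 3 * leaf th' 3 = 1 := th'_mul_self 3
  simpa only [map_mul, map_one, hφ, Equiv.swap_apply_left] using congrArg φ square

theorem commute_mul_of_conj_eq {G : Type*} [Group G] {s u x y : G} (hs : s * s = 1)
    (hu : u * u = 1) (hx : x * x = 1) (hy : y * y = 1) (conj_y : s * y * s = x)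
    (conj_u : s * u * s = u) (h : s * y * u * y * (s * y * u * y) = 1) : Commute (x * y) u := by
  have expand : s * y * s * (s * u * s) * (s * y * s) * (y * u * y) =
      s * y * u * y * (s * y * u * y) := by
    clear h conj_y conj_u
    grind
  rw [conj_y, conj_u, h] at expand
  have fixed : u * (x * y) * u = x * y :=
    calc u * (x * y) * u = x * (x * u * x * (y * u * y)) * y := by
          clear h conj_y conj_u expand hs hu
          grind
      _ = x * y := by rw [expand, mul_one]
  rw [commute_iff_eq]
  clear h conj_y conj_u expand hs hx hy
  grind

-- With `s = a c` and `u = e * (leaf th' 2 * leaf th' 3) * e`, the word `a σ τ σ` equals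
-- `s * leaf th' 1 * u * leaf th' 1`, and conjugation by `s` fixes `u` and turns `leaf th' 1` into
-- `leaf th' 0`.
theorem commute_leaf_pair_conj_leaf_pair :
    Commute (leaf th' 0 * leaf th' 1) (th' 4 * (leaf th' 2 * leaf th' 3) * th' 4) := by
  have a_sq := th'_mul_self 0
  have c_sq := th'_mul_self 2
  have ac_comm := th'_comm (show cox6 0 2 = 2 by decide)
  have s_sq : th' 0 * th' 2 * (th' 0 * th' 2) = 1 := by grind
  set s := th' 0 * th' 2
  set u := th' 4 * (leaf th' 2 * leaf th' 3) * th' 4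
  have e_sq := th'_mul_self 4
  have ae_comm := th'_comm (show cox6 0 4 = 2 by decide)
  have ce_comm := th'_comm (show cox6 2 4 = 2 by decide)
  have leaf_zero : th' 0 * leaf th' 1 * th' 0 = leaf th' 0 := conj_leaf 0 1
  have leaf_two : th' 2 * leaf th' 3 * th' 2 = leaf th' 2 := conj_leaf 2 3
  have c_leaf_one : th' 2 * leaf th' 1 * th' 2 = leaf th' 1 := conj_leaf 2 1
  have a_leaf_two : th' 0 * leaf th' 2 * th' 0 = leaf th' 2 := conj_leaf 0 2
  have a_leaf_three : th' 0 * leaf th' 3 * th' 0 = leaf th' 3 := conj_leaf 0 3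
  have factor : th' 0 * leaf th' 1 * (th' 4 * leaf th' 3 * th' 2 * leaf th' 3 * th' 4) *
      leaf th' 1 = s * leaf th' 1 * u * leaf th' 1 := by
    grind
  have conj_leaf_one : s * leaf th' 1 * s = leaf th' 0 := by grind
  have comm_two_three := (commute_leaf 2 3).eq
  have conj_u : s * u * s = u := by grind
  have u_sq : u * u = 1 := by
    have := leaf_mul_self 3
    grind
  have extra : s * leaf th' 1 * u * leaf th' 1 * (s * leaf th' 1 * u * leaf th' 1) = 1 := by
    rw [← factor, ← pow_two]
    exact toroidalRelator_th'
  exact commute_mul_of_conj_eq s_sq u_sq (leaf_mul_self 0) (leaf_mul_self 1)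
    conj_leaf_one conj_u extra

theorem starRelations_leaf : StarRelations (leaf th') (th' 4) (th' 5) where
  leaves := ⟨leaf_mul_self, fun i j => commute_leaf i j⟩
  e_sq := th'_mul_self 4
  f_sq := th'_mul_self 5
  braid_leaf := braid_leaf
  braid := th'_braid (by decide)
  comm_leaf := th'_five_comm_leaf
  disjoint π := by
    obtain ⟨φ, hφe, -, hφ⟩ := exists_mulAut_leaf π
    rw [conjFamily, conjFamily, conj_mul, th'_inv]
    simpa only [map_mul, hφe, hφ] using commute_leaf_pair_conj_leaf_pair.map φ

theorem enatCard_Theta'_le : ENat.card Theta' ≤ 2 ^ 18 * 3 ^ 2 := by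
  set N := closure (Set.range (leaf th') ∪ {th' 4, th' 5})
  have leaf_mem (i) : leaf th' i ∈ N := subset_closure (Or.inl ⟨i, rfl⟩)
  have e_mem : th' 4 ∈ N := subset_closure (by simp)
  have f_mem : th' 5 ∈ N := subset_closure (by simp)
  have mem_normalizer (i : Fin 3) : th' (i.castLE (by decide)) ∈ normalizer (N : Set Theta') := by
    refine mem_normalizer_closure (th'_mul_self _) ?_
    rintro _ (⟨j, rfl⟩ | rfl | rfl)
    · exact conj_leaf i j ▸ leaf_mem _
    · exact (th'_conj (i := i.castLE (by decide)) (j := 4) (by decide +revert)).symm ▸ e_mem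
    · exact (th'_conj (i := i.castLE (by decide)) (j := 5) (by decide +revert)).symm ▸ f_mem
  have normalizes : closure {th' 0, th' 1, th' 2} ≤ normalizer (N : Set Theta') := by
    rw [closure_le]
    rintro _ (rfl | rfl | rfl)
    exacts [mem_normalizer 0, mem_normalizer 1, mem_normalizer 2]
  have top_le : ⊤ ≤ closure {th' 0, th' 1, th' 2} ⊔ N := by
    rw [← closure_range_th', closure_le]
    rintro _ ⟨i, rfl⟩
    fin_cases i
    exacts [mem_sup_left (subset_closure (by simp)), mem_sup_left (subset_closure (by simp)),
      mem_sup_left (subset_closure (by simp)), mem_sup_right (leaf_mem 3), mem_sup_right e_mem,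
      mem_sup_right f_mem]
  calc ENat.card Theta' = ENat.card (⊤ : Subgroup Theta') :=
        (ENat.card_congr topEquiv.toEquiv).symm
    _ ≤ ENat.card (closure {th' 0, th' 1, th' 2}) * ENat.card N :=
        (enatCard_mono top_le).trans (enatCard_sup_le normalizes)
    _ ≤ 24 * (24 * 8 ^ 4) := mul_le_mul'
        (enatCard_closure_triple_le (th'_mul_self 0) (th'_mul_self 1) (th'_mul_self 2)
          (th'_braid (by decide)) (th'_braid (by decide)) (th'_comm (by decide)))
        starRelations_leaf.enatCard_closure_le
    _ = 2 ^ 18 * 3 ^ 2 := by norm_num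

end UpperBound

section LowerBound

theorem card_map_mul_card_inf_ker {G H : Type*} [Group G] [Group H] (φ : G →* H)
    (K : Subgroup G) : Nat.card (K.map φ) * Nat.card (K ⊓ φ.ker : Subgroup G) = Nat.card K := by
  rw [← relIndex_ker, ← inf_relIndex_right, ← relIndex_bot_left, ← relIndex_bot_left, mul_comm,
    inf_comm, relIndex_mul_relIndex _ _ _ bot_le inf_le_right]

theorem exists_hom_comp_th' {H : Type*} [Group H] {g : Fin 6 → H}
    (cox : ∀ i j, (g i * g j) ^ cox6 i j = 1)
    (toroidal : toroidalRelator g = 1) : ∃ φ : Theta' →* H, φ ∘ th' = g := by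
  have rels_eq_one : ∀ r ∈ rels6, FreeGroup.lift g r = 1 := by
    rintro _ ⟨⟨i, j⟩, rfl⟩
    simpa only [map_pow, map_mul, FreeGroup.lift_apply_of] using cox i j
  have toGroup_w (i) : PresentedGroup.toGroup rels_eq_one (w i) = g i :=
    PresentedGroup.toGroup.of rels_eq_one
  have normalClosure_le : normalClosure ({(w 0 * sg * tu * sg) ^ 2} : Set W) ≤
      (PresentedGroup.toGroup rels_eq_one).ker := by
    refine normalClosure_le_normal (Set.singleton_subset_iff.2 ?_)
    rw [SetLike.mem_coe, MonoidHom.mem_ker]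
    simpa only [sg, tu, map_pow, map_mul, toGroup_w, toroidalRelator] using toroidal
  exact ⟨QuotientGroup.lift _ _ normalClosure_le, funext toGroup_w⟩

/-- The generators of `S₄ × S₄` that are the images of the six reflections when the double bond
`c – d` of the diagram is cut. -/
def coordSwap : Fin 6 → Perm (Fin 4) × Perm (Fin 4) :=
  ![(swap 0 1, 1), (swap 1 2, 1), (swap 2 3, 1), (1, swap 0 1), (1, swap 1 2), (1, swap 2 3)]

theorem closure_range_coordSwap : closure (Set.range coordSwap) = ⊤ := by
  have mem (i) : coordSwap i ∈ closure (Set.range coordSwap) := subset_closure ⟨i, rfl⟩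
  have mem_of_adjacent (f : Perm (Fin 4) →* Perm (Fin 4) × Perm (Fin 4))
      (h : ∀ i : Fin 3, f (swap i.castSucc i.succ) ∈ closure (Set.range coordSwap)) (π) :
      f π ∈ closure (Set.range coordSwap) := by
    have le_comap := Submonoid.closure_le
      (S := ((closure (Set.range coordSwap)).comap f).toSubmonoid).2 (Set.range_subset_iff.2 h)
    rw [Perm.mclosure_swap_castSucc_succ] at le_comap
    exact le_comap (Submonoid.mem_top π)
  rw [eq_top_iff]
  rintro ⟨π, ρ⟩ -
  rw [← mul_one π, ← one_mul ρ, ← Prod.mk_mul_mk]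
  refine mul_mem (mem_of_adjacent (.inl _ _) (fun i => ?_) π)
    (mem_of_adjacent (.inr _ _) (fun i => ?_) ρ)
  · fin_cases i
    exacts [mem 0, mem 1, mem 2]
  · fin_cases i
    exacts [mem 3, mem 4, mem 5]

/-- The permutation of the signed symbols `ι × {±}` that moves the symbols by `π` and changes the
sign of those `i` with `v i = 1`; signs are written additively. -/
def signedPerm {ι : Type*} (π : Perm ι) (v : ι → ZMod 2) : Perm (ι × ZMod 2) :=
  Equiv.prodShear π fun i => Equiv.addRight (v i)

theorem two_pow_card_le_card_of_signedPerm_mem {ι κ : Type*} [Fintype κ] [Finite ι]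
    {E : κ → ι → ZMod 2} (hE : LinearIndependent (ZMod 2) E) {K : Subgroup (Perm (ι × ZMod 2))}
    (h : ∀ k, signedPerm 1 (E k) ∈ K) : 2 ^ Fintype.card κ ≤ Nat.card K := by
  have signedPerm_add (v v' : ι → ZMod 2) :
      signedPerm 1 (v + v') = signedPerm 1 v' * signedPerm 1 v := by
    ext ⟨i, s⟩
    · rfl
    · exact (add_assoc s (v i) (v' i)).symm
  have signedPerm_zero : signedPerm 1 (0 : ι → ZMod 2) = 1 := by
    ext ⟨i, s⟩
    · rfl
    · exact add_zero s
  have signedPerm_injective : Function.Injective (signedPerm (1 : Perm ι)) := fun v v' hv =>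
    funext fun i => by simpa [signedPerm] using congrArg (fun π => (π (i, 0)).2) hv
  have mem (c : κ → ZMod 2) : signedPerm 1 (Fintype.linearCombination (ZMod 2) E c) ∈ K := by
    rw [Fintype.linearCombination_apply]
    refine Finset.sum_induction _ (signedPerm 1 · ∈ K)
      (fun v v' hv hv' => signedPerm_add v v' ▸ mul_mem hv' hv)
      (signedPerm_zero ▸ one_mem K) fun k _ => ?_
    obtain hk | hk : c k = 0 ∨ c k = 1 := by generalize c k = s; decide +revert
    · rw [hk, zero_smul, signedPerm_zero]
      exact one_mem K
    · rw [hk, one_smul]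
      exact h k
  calc 2 ^ Fintype.card κ = Nat.card (κ → ZMod 2) := by
          rw [Nat.card_fun, Nat.card_zmod, Nat.card_eq_fintype_card]
    _ ≤ Nat.card K := Nat.card_le_card_of_injective (fun c => ⟨_, mem c⟩) fun c c' hc =>
        hE.fintypeLinearCombination_injective (signedPerm_injective (congrArg Subtype.val hc))

/-- The six reflections as signed permutations of the cells of a `4 × 4` grid: `a, b, c` permute
the rows and `d, e, f` the columns, and `d` also changes the signs of two cells of the last row. -/
def signedGridGen : Fin 6 → Perm ((Fin 4 × Fin 4) × ZMod 2) :=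
  ![signedPerm (.prodCongr (swap 0 1) 1) 0, signedPerm (.prodCongr (swap 1 2) 1) 0,
    signedPerm (.prodCongr (swap 2 3) 1) 0,
    signedPerm (.prodCongr 1 (swap 0 1)) fun rc => if rc.1 = 3 ∧ rc.2 < 2 then 1 else 0,
    signedPerm (.prodCongr 1 (swap 1 2)) 0, signedPerm (.prodCongr 1 (swap 2 3)) 0]

theorem signedGridGen_pow_cox6 (i j : Fin 6) :
    (signedGridGen i * signedGridGen j) ^ cox6 i j = 1 := by
  decide +revert +kernel

/-- The indicator of the corners of the rectangle spanned by the rows `ik.1` and `3` and the columns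
`0` and `ik.2 + 1`. -/
def rectangle (ik : Fin 3 × Fin 3) (rc : Fin 4 × Fin 4) : ZMod 2 :=
  if (rc.1 = ik.1.castSucc ∨ rc.1 = 3) ∧ (rc.2 = 0 ∨ rc.2 = ik.2.succ) then 1 else 0

theorem linearIndependent_rectangle : LinearIndependent (ZMod 2) rectangle := by
  have corner (ik jl : Fin 3 × Fin 3) :
      rectangle ik (jl.1.castSucc, jl.2.succ) = if ik = jl then 1 else 0 := by
    decide +revert +kernel
  refine Fintype.linearIndependent_iff.2 fun c hc jl => ?_
  simpa [corner] using congrFun hc (jl.1.castSucc, jl.2.succ)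

theorem leafPair_signedGridGen (ik : Fin 3 × Fin 3) :
    leafPair signedGridGen ik = signedPerm 1 (rectangle ik) := by
  decide +revert +kernel

theorem leafPair_coordSwap (ik : Fin 3 × Fin 3) : leafPair coordSwap ik = 1 := by
  decide +revert +kernel

theorem leafLinks_coordSwap (k : Fin 3) : leafLinks coordSwap k = 1 := by
  decide +revert +kernel

theorem leafLinks_signedGridGen (k : Fin 3) : leafLinks signedGridGen k = 1 := by
  decide +revert +kernel

/-- Labellings modulo `4` of the diagram joining `e` to `f` and to four leaves, where the labels of
the leaves have equal parity: `(p, q, y, z)` labels leaf `i` with `xᵢ = p + 2 qᵢ`, `e` with `y` and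
`f` with `z`. The pair `(p, q)` carries one bit more than the `xᵢ`. -/
abbrev Labelling : Type := ZMod 4 × (Fin 4 → ZMod 2) × ZMod 4 × ZMod 4

/-- The six reflections acting on labellings: `a, b, c` permute the leaves, and `d, e, f` negate the
label of leaf `3`, of `e` and of `f` respectively after adding it to the labels of all neighbours,
as in the reflection representation of the Coxeter group of the labelled diagram. -/
def labelGen : Fin 6 → Labelling → Labelling
  | 0, (p, q, y, z) => (p, q ∘ swap 0 1, y, z)
  | 1, (p, q, y, z) => (p, q ∘ swap 1 2, y, z)
  | 2, (p, q, y, z) => (p, q ∘ swap 2 3, y, z)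
  | 3, (p, q, y, z) => (p, q + Pi.single 3 p.cast, y + p + 2 * (q 3).cast, z)
  | 4, (p, q, y, z) => (p + y, q, -y, z + y)
  | 5, (p, q, y, z) => (p, q, y + z, -z)

theorem labelGen_add (i : Fin 6) (v v' : Labelling) :
    labelGen i (v + v') = labelGen i v + labelGen i v' := by
  obtain ⟨p, q, y, z⟩ := v
  obtain ⟨p', q', y', z'⟩ := v'
  have double_add : ∀ s t : ZMod 2, (2 * (s + t).cast : ZMod 4) = 2 * s.cast + 2 * t.cast := by
    decide
  have cast_add : ((p + p').cast : ZMod 2) = p.cast + p'.cast := ZMod.cast_add (by decide) p p'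
  fin_cases i <;>
    simp only [labelGen, Prod.mk_add_mk, Pi.add_apply, cast_add, double_add, Pi.single_add]
  · rfl
  · rfl
  · rfl
  · congr 2
    · abel
    · congr 1; abel
  · congr 1
    · abel
    · congr 2 <;> abel
  · congr 3 <;> abel

/-- A generating family of the additive group `Labelling`, on which identities between endomorphisms
are checked. -/
def unitLabelling : Fin 7 → Labelling :=
  ![(1, 0, 0, 0), (0, Pi.single 0 1, 0, 0), (0, Pi.single 1 1, 0, 0), (0, Pi.single 2 1, 0, 0),
    (0, Pi.single 3 1, 0, 0), (0, 0, 1, 0), (0, 0, 0, 1)]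

theorem span_range_unitLabelling : Submodule.span ℤ (Set.range unitLabelling) = ⊤ := by
  have mem (i : Fin 7) : unitLabelling i ∈ Submodule.span ℤ (Set.range unitLabelling) :=
    Submodule.subset_span ⟨i, rfl⟩
  rw [eq_top_iff]
  rintro ⟨p, q, y, z⟩ -
  have decomposition : (p, q, y, z) = p.val • unitLabelling 0 + (q 0).val • unitLabelling 1 +
      (q 1).val • unitLabelling 2 + (q 2).val • unitLabelling 3 + (q 3).val • unitLabelling 4 +
      y.val • unitLabelling 5 + z.val • unitLabelling 6 := by
    ext i
    · simp [unitLabelling]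
    · fin_cases i <;> simp [unitLabelling, -ZMod.natCast_val, ZMod.natCast_zmod_val]
    · simp [unitLabelling]
    · simp [unitLabelling]
  rw [decomposition]
  repeat' first | apply add_mem | apply nsmul_mem | exact mem _

/-- The map `labelGen i` as an endomorphism of the additive group. -/
def labelEnd (i : Fin 6) : Labelling →ₗ[ℤ] Labelling :=
  (AddMonoidHom.mk' (labelGen i) (labelGen_add i)).toIntLinearMap

theorem labelEnd_involutive (i : Fin 6) : Function.Involutive (labelEnd i) := by
  refine LinearMap.congr_fun (f := labelEnd i ∘ₗ labelEnd i) (g := LinearMap.id) ?_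
  apply LinearMap.ext_on_range span_range_unitLabelling
  decide +revert +kernel

/-- The map `labelGen i` as an automorphism of the additive group. -/
def labelAut (i : Fin 6) : Labelling ≃ₗ[ℤ] Labelling :=
  .ofInvolutive (labelEnd i) (labelEnd_involutive i)

theorem labelAut_ext {φ ψ : Labelling ≃ₗ[ℤ] Labelling}
    (h : ∀ k, φ (unitLabelling k) = ψ (unitLabelling k)) : φ = ψ :=
  LinearEquiv.toLinearMap_injective (LinearMap.ext_on_range span_range_unitLabelling h)

theorem labelAut_pow_cox6 (i j : Fin 6) : (labelAut i * labelAut j) ^ cox6 i j = 1 := by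
  apply labelAut_ext
  decide +revert +kernel

theorem toroidalRelator_labelAut : toroidalRelator labelAut = 1 := by
  apply labelAut_ext
  decide +kernel

theorem leafLinks_labelAut_products_injective :
    Function.Injective fun n : Fin 2 × Fin 2 × Fin 2 => leafLinks labelAut 0 ^ n.1.val *
      leafLinks labelAut 1 ^ n.2.1.val * leafLinks labelAut 2 ^ n.2.2.val := by
  let coordinates (φ : Labelling ≃ₗ[ℤ] Labelling) : ZMod 4 × ZMod 4 × ZMod 4 :=
    ((φ (0, 0, 1, 0)).2.2.1, (φ (0, 0, 0, 1)).1, (φ (0, 0, 0, 1)).2.2.1)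
  apply Function.Injective.of_comp (f := coordinates)
  unfold Function.Injective
  decide +kernel

theorem le_card_Theta' [Finite Theta'] : 2 ^ 18 * 3 ^ 2 ≤ Nat.card Theta' := by
  obtain ⟨α, hα⟩ := exists_hom_comp_th' (g := coordSwap) (by decide +kernel) (by decide +kernel)
  obtain ⟨β, hβ⟩ := exists_hom_comp_th' signedGridGen_pow_cox6 (by decide +kernel)
  obtain ⟨γ, hγ⟩ := exists_hom_comp_th' labelAut_pow_cox6 toroidalRelator_labelAut
  have card_map_α : Nat.card (map α ⊤) = 576 := by
    rw [← closure_range_th', MonoidHom.map_closure, ← Set.range_comp, hα, closure_range_coordSwap,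
      card_top, Nat.card_prod, Nat.card_perm, Nat.card_fin]
    rfl
  have card_map_β : 2 ^ 9 ≤ Nat.card (α.ker.map β) := by
    refine two_pow_card_le_card_of_signedPerm_mem linearIndependent_rectangle fun ik =>
      ⟨leafPair th' ik, ?_, ?_⟩
    · rw [SetLike.mem_coe, MonoidHom.mem_ker, map_leafPair, hα, leafPair_coordSwap]
    · rw [map_leafPair, hβ, leafPair_signedGridGen]
  have card_map_γ : 2 ^ 3 ≤ Nat.card ((α.ker ⊓ β.ker).map γ) := by
    have link_mem (k) : leafLinks labelAut k ∈ (α.ker ⊓ β.ker).map γ := by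
      refine ⟨leafLinks th' k, mem_inf.2 ⟨?_, ?_⟩, ?_⟩
      · rw [MonoidHom.mem_ker, map_leafLinks, hα, leafLinks_coordSwap]
      · rw [MonoidHom.mem_ker, map_leafLinks, hβ, leafLinks_signedGridGen]
      · rw [map_leafLinks, hγ]
    have : Finite ((α.ker ⊓ β.ker).map γ) := Finite.Set.finite_image _ γ
    calc 2 ^ 3 = Nat.card (Fin 2 × Fin 2 × Fin 2) := by simp
      _ ≤ _ := Nat.card_le_card_of_injective
        (fun n => ⟨_, mul_mem (mul_mem (pow_mem (link_mem 0) n.1) (pow_mem (link_mem 1) n.2.1))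
          (pow_mem (link_mem 2) n.2.2)⟩)
        fun n n' h => leafLinks_labelAut_products_injective (congrArg Subtype.val h)
  calc 2 ^ 18 * 3 ^ 2 = 576 * (2 ^ 9 * 2 ^ 3) := by norm_num
    _ ≤ Nat.card (map α ⊤) * (Nat.card (α.ker.map β) * Nat.card ((α.ker ⊓ β.ker).map γ)) := by
      rw [card_map_α]
      gcongr
    _ ≤ Nat.card (map α ⊤) *
        (Nat.card (α.ker.map β) * Nat.card (α.ker ⊓ β.ker : Subgroup Theta')) := by
      gcongr
      exact Nat.le_of_dvd Nat.card_pos (card_map_dvd _ γ)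
    _ = Nat.card Theta' := by
      rw [card_map_mul_card_inf_ker, ← top_inf_eq α.ker, card_map_mul_card_inf_ker, card_top]

end LowerBound

end LocallyToroidal

/-- Theta' is finite of order 2^18 * 3^2 = 2359296. -/
theorem stmt_9 : Finite Theta' ∧ Nat.card Theta' = 2 ^ 18 * 3 ^ 2 := by
  have upper := LocallyToroidal.enatCard_Theta'_le
  have finite : Finite Theta' := ENat.card_lt_top.1 (upper.trans_lt (by decide))
  refine ⟨finite, le_antisymm ?_ LocallyToroidal.le_card_Theta'⟩
  rw [ENat.card_eq_coe_natCard] at upper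
  exact_mod_cast upper
end

section
/- In Theta', the subgroup generated by the images of b, c, d, e, f has index 32, and the subgroup generated by the images of a, b, c, d, e has index 128. (These are the numbers of vertices and facets of the universal polytope {{3,3,4,3}_{(2,0,0,0)}, {3,4,3,3}_{(2,2,0,0)}}.) -/
/-!
Reversing the diagram exchanges vertices and facets, so both indices count cosets of
`⟨s 0, …, s 4⟩`. The four conjugates of `s 2` under the symmetric group `⟨s 3, s 4, s 5⟩` commute
with each other, by the relation of order four. A coset is given coordinates: one of four frames
permuted by `⟨s 3, s 4, s 5⟩`, one of four axes of that frame permuted by the symmetric group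
`⟨leaf s 3, s 1, s 0⟩`, and signs, changed by conjugates of the products of `s 0` with a conjugate
of `s 2`. The extra relation controls the signs: read from one end of the diagram it says that the
images of the base coset under sign changes are still fixed by the generators permuting the other
axes, so that three independent signs leave `4 * 4 * 2 ^ 3` cosets, and read from the other end it
says that the three sign changes agree on the base coset, which leaves `4 * 4 * 2`. An explicit
action on signed axes shows that these cosets are distinct.
-/

open Equiv MulAction

section Leaves

variable {G : Type*} [Group G]

/-- The Coxeter relations of the string diagram [3,3,4,3,3] for a family in an arbitrary group. -/
def IsCoxeterFamily (s : Fin 6 → G) : Prop :=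
  ∀ i j, (s i * s j) ^ cox6 i j = 1

/-- The word `a σ τ σ` of the statement in an arbitrary group. -/
def extraRelator (s : Fin 6 → G) : G :=
  s 0 * (s 1 * s 2 * s 3 * s 2 * s 1) * (s 4 * s 3 * s 2 * s 3 * s 4) *
    (s 1 * s 2 * s 3 * s 2 * s 1)

/-- Representatives of the left cosets of `⟨p 1, p 2⟩` in a symmetric group of degree four with
Coxeter generators `p 0`, `p 1`, `p 2`; the `k`-th one takes the point `0` to `k`. -/
def cosetRep (p : Fin 3 → G) : Fin 4 → G :=
  ![1, p 0, p 1 * p 0, p 2 * p 1 * p 0]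

theorem mul_cosetRep {p : Fin 3 → G} (hsq : ∀ i, p i * p i = 1)
    (h01 : p 0 * p 1 * p 0 = p 1 * p 0 * p 1) (h12 : p 1 * p 2 * p 1 = p 2 * p 1 * p 2)
    (h02 : Commute (p 0) (p 2)) (i : Fin 3) (k : Fin 4) :
    ∃ t ∈ ({1, p 1, p 2} : Set G),
      p i * cosetRep p k = cosetRep p (swap i.castSucc i.succ k) * t := by
  fin_cases i <;> fin_cases k
  · exact ⟨1, by simp, show p 0 * 1 = p 0 * 1 from rfl⟩
  · exact ⟨1, by simp, show p 0 * p 0 = 1 * 1 by rw [hsq, one_mul]⟩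
  · exact ⟨p 1, by simp, show p 0 * (p 1 * p 0) = p 1 * p 0 * p 1 by rw [← mul_assoc, h01]⟩
  · refine ⟨p 1, by simp, show p 0 * (p 2 * p 1 * p 0) = p 2 * p 1 * p 0 * p 1 from ?_⟩
    rw [mul_assoc (p 2), h02.left_comm, ← mul_assoc (p 0), h01]
    simp only [mul_assoc]
  · exact ⟨p 1, by simp, show p 1 * 1 = 1 * p 1 by rw [mul_one, one_mul]⟩
  · exact ⟨1, by simp, show p 1 * p 0 = p 1 * p 0 * 1 by rw [mul_one]⟩
  · exact ⟨1, by simp, show p 1 * (p 1 * p 0) = p 0 * 1 by rw [← mul_assoc, hsq, one_mul, mul_one]⟩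
  · refine ⟨p 2, by simp, show p 1 * (p 2 * p 1 * p 0) = p 2 * p 1 * p 0 * p 2 from ?_⟩
    rw [mul_assoc _ (p 0), h02.eq, ← mul_assoc, ← mul_assoc, ← mul_assoc, h12]
  · exact ⟨p 2, by simp, show p 2 * 1 = 1 * p 2 by rw [mul_one, one_mul]⟩
  · exact ⟨p 2, by simp, show p 2 * p 0 = p 0 * p 2 from h02.symm.eq⟩
  · exact ⟨1, by simp, show p 2 * (p 1 * p 0) = p 2 * p 1 * p 0 * 1 by rw [mul_one, mul_assoc]⟩
  · exact ⟨1, by simp, show p 2 * (p 2 * p 1 * p 0) = p 1 * p 0 * 1 by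
      rw [mul_assoc, ← mul_assoc, hsq, one_mul, mul_one]⟩

theorem commute_cosetRep {p : Fin 3 → G} {x : G} (h : ∀ i, Commute x (p i)) (k : Fin 4) :
    Commute x (cosetRep p k) := by
  fin_cases k
  · exact Commute.one_right x
  · exact h 0
  · exact (h 1).mul_right (h 0)
  · exact ((h 2).mul_right (h 1)).mul_right (h 0)

/-- The four conjugates of `s 2` under the symmetric group `⟨s 3, s 4, s 5⟩`. Together with `s 0`
they are the five leaves of a star-shaped Coxeter diagram with centre `s 1`. -/
def leaf (s : Fin 6 → G) (k : Fin 4) : G :=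
  MulAut.conj (cosetRep (fun i : Fin 3 ↦ s (i.natAdd 3)) k) (s 2)

theorem map_cosetRep {H : Type*} [Group H] (f : G →* H) (p : Fin 3 → G) (k : Fin 4) :
    f (cosetRep p k) = cosetRep (f ∘ p) k := by
  fin_cases k <;> simp [cosetRep]

theorem map_leaf {H : Type*} [Group H] (f : G →* H) (s : Fin 6 → G) (k : Fin 4) :
    f (leaf s k) = leaf (f ∘ s) k := by
  rw [leaf, MulAut.conj_apply, map_mul, map_mul, map_inv, map_cosetRep]
  rfl

theorem mul_pow_three_eq_one_of_braid {x y : G} (hx : x * x = 1) (hy : y * y = 1)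
    (hxy : x * y * x = y * x * y) : (x * y) ^ 3 = 1 :=
  calc (x * y) ^ 3 = x * y * x * (y * x * y) := by
        simp only [pow_succ, pow_zero, one_mul, mul_assoc]
    _ = 1 := by
        rw [hxy]
        simp only [mul_assoc, ← mul_assoc y y, ← mul_assoc x x, hx, hy, one_mul]

theorem commute_of_mul_sq_eq_one {x y : G} (hx : x * x = 1) (hy : y * y = 1)
    (hxy : (x * y) ^ 2 = 1) : Commute x y := by
  rw [pow_two, mul_eq_one_iff_eq_inv, mul_inv_rev, inv_eq_of_mul_eq_one_left hx,
    inv_eq_of_mul_eq_one_left hy] at hxy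
  exact hxy

theorem isCoxeterFamily_of_lt {s : Fin 6 → G} (hsq : ∀ i, s i * s i = 1)
    (h : ∀ i j, i < j → (s i * s j) ^ cox6 i j = 1) : IsCoxeterFamily s := by
  have hinv (i : Fin 6) : (s i)⁻¹ = s i := inv_eq_of_mul_eq_one_left (hsq i)
  have cox6_comm : ∀ i j, cox6 i j = cox6 j i := by decide
  intro i j
  obtain hij | rfl | hij := lt_trichotomy i j
  · exact h i j hij
  · simpa [cox6] using hsq i
  · have := congrArg (·⁻¹) (h j i hij)
    simpa only [← inv_pow, mul_inv_rev, hinv, inv_one, cox6_comm j i] using this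

namespace IsCoxeterFamily

variable {s : Fin 6 → G} (hs : IsCoxeterFamily s)
include hs

theorem comp_rev : IsCoxeterFamily (s ∘ Fin.rev) := by
  have cox6_rev : ∀ i j, cox6 i.rev j.rev = cox6 i j := by decide
  intro i j
  simpa only [Function.comp_apply, cox6_rev] using hs i.rev j.rev

theorem mul_self (i : Fin 6) : s i * s i = 1 := by
  simpa [cox6] using hs i i

theorem inv_eq_self (i : Fin 6) : (s i)⁻¹ = s i :=
  inv_eq_of_mul_eq_one_left (hs.mul_self i)

theorem commute {i j : Fin 6} (hij : cox6 i j = 2) : Commute (s i) (s j) :=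
  commute_of_mul_sq_eq_one (hs.mul_self i) (hs.mul_self j) (hij ▸ hs i j)

theorem braid {i j : Fin 6} (hij : cox6 i j = 3) : s i * s j * s i = s j * s i * s j := by
  have h : (s i * s j * s i) * (s j * s i * s j) = 1 := by
    rw [← hs i j, hij]
    simp only [pow_succ, pow_zero, one_mul, mul_assoc]
  simpa only [mul_inv_rev, hs.inv_eq_self, mul_assoc] using eq_inv_of_mul_eq_one_left h

theorem commute_natAdd (i : Fin 3) (j : Fin 2) : Commute (s (i.natAdd 3)) (s (j.castAdd 4)) := by
  have cox6_natAdd_castAdd : ∀ (i : Fin 3) (j : Fin 2), cox6 (i.natAdd 3) (j.castAdd 4) = 2 := by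
    decide
  exact hs.commute (cox6_natAdd_castAdd i j)

theorem conj_leaf (i : Fin 3) (k : Fin 4) :
    MulAut.conj (s (i.natAdd 3)) (leaf s k) = leaf s (swap i.castSucc i.succ k) := by
  obtain ⟨t, ht, h⟩ := mul_cosetRep (p := fun i : Fin 3 ↦ s (i.natAdd 3)) (fun _ ↦ hs.mul_self _)
    (hs.braid rfl) (hs.braid rfl) (hs.commute rfl) i k
  have ht2 : Commute t (s 2) := by
    obtain rfl | rfl | rfl := ht
    · exact Commute.one_left _
    · exact hs.commute rfl
    · exact hs.commute rfl
  rw [leaf, ← MulAut.mul_apply, ← map_mul, h, map_mul, MulAut.mul_apply, MulAut.conj_apply t,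
    ht2.eq, mul_inv_cancel_right, leaf]

theorem exists_conj_leaf (σ : Perm (Fin 4)) :
    ∃ g, Commute g (s 0) ∧ Commute g (s 1) ∧
      ∀ k, MulAut.conj g (leaf s k) = leaf s (σ k) := by
  have hσ : σ ∈ Submonoid.closure (Set.range fun i : Fin 3 ↦ swap i.castSucc i.succ) := by
    rw [Perm.mclosure_swap_castSucc_succ]
    trivial
  induction hσ using Submonoid.closure_induction with
  | mem σ hσ =>
    obtain ⟨i, rfl⟩ := hσ
    exact ⟨s (i.natAdd 3), hs.commute_natAdd i 0, hs.commute_natAdd i 1, hs.conj_leaf i⟩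
  | one => exact ⟨1, Commute.one_left _, Commute.one_left _, by simp⟩
  | mul σ σ' _ _ ih ih' =>
    obtain ⟨g, g0, g1, hg⟩ := ih
    obtain ⟨g', g0', g1', hg'⟩ := ih'
    refine ⟨g * g', g0.mul_left g0', g1.mul_left g1', fun k ↦ ?_⟩
    rw [map_mul, MulAut.mul_apply, hg', hg, Perm.mul_apply]

theorem leaf_mul_self (k : Fin 4) : leaf s k * leaf s k = 1 := by
  rw [leaf, ← map_mul, hs.mul_self, map_one]

theorem leaf_inv (k : Fin 4) : (leaf s k)⁻¹ = leaf s k :=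
  inv_eq_of_mul_eq_one_left (hs.leaf_mul_self k)

end IsCoxeterFamily

theorem leaf_zero (s : Fin 6 → G) : leaf s 0 = s 2 := by
  simp [leaf, cosetRep]

namespace IsCoxeterFamily

variable {s : Fin 6 → G} (hs : IsCoxeterFamily s)
include hs

theorem commute_zero_leaf (k : Fin 4) : Commute (s 0) (leaf s k) := by
  obtain ⟨g, g0, -, hg⟩ := hs.exists_conj_leaf (swap 0 k)
  have h := (hs.commute (i := 0) (j := 2) rfl).map (MulAut.conj g)
  rwa [← leaf_zero s, hg, swap_apply_left, MulAut.conj_apply, g0.eq, mul_inv_cancel_right] at h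

theorem braid_leaf (k : Fin 4) : leaf s k * s 1 * leaf s k = s 1 * leaf s k * s 1 := by
  obtain ⟨g, -, g1, hg⟩ := hs.exists_conj_leaf (swap 0 k)
  have h := congrArg (MulAut.conj g) (hs.braid (i := 2) (j := 1) rfl)
  rwa [← leaf_zero s, map_mul, map_mul, map_mul, map_mul, hg, swap_apply_left,
    MulAut.conj_apply g (s 1), g1.eq, mul_inv_cancel_right] at h

theorem commute_leaf (i j : Fin 4) : Commute (leaf s i) (leaf s j) := by
  have h01 : Commute (leaf s 0) (leaf s 1) := by
    have h := hs 2 3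
    rw [show cox6 2 3 = 4 from rfl, show 4 = 2 + 2 from rfl, pow_add, mul_eq_one_iff_eq_inv] at h
    simpa [leaf, cosetRep, Commute, SemiconjBy, pow_two, mul_assoc, hs.inv_eq_self] using h
  obtain rfl | hij := eq_or_ne i j
  · exact Commute.refl _
  have two_transitive : ∀ i j : Fin 4, i ≠ j → ∃ σ : Perm (Fin 4), σ 0 = i ∧ σ 1 = j := by decide
  obtain ⟨σ, rfl, rfl⟩ := two_transitive i j hij
  obtain ⟨g, -, -, hg⟩ := hs.exists_conj_leaf σ
  simpa only [hg] using h01.map (MulAut.conj g)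

end IsCoxeterFamily

end Leaves

section SignChanges

variable {G : Type*} [Group G]

/-- For a leaf `c = leaf s k` and `a = s 0` the product `a * c` lies in a Coxeter group of type
`A₃`; conjugating it by `leaf s 3 * s 1` gives an involution which, in the coordinates on cosets
used below, changes a sign. -/
def signChange (s : Fin 6 → G) (k : Fin 4) : G :=
  MulAut.conj (leaf s 3 * s 1) (s 0 * leaf s k)

theorem map_signChange {H : Type*} [Group H] (f : G →* H) (s : Fin 6 → G) (k : Fin 4) :
    f (signChange s k) = signChange (f ∘ s) k := by
  simp only [signChange, MulAut.conj_apply, map_mul f, map_inv f, map_leaf f, Function.comp_apply]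

namespace IsCoxeterFamily

variable {s : Fin 6 → G} (hs : IsCoxeterFamily s)
include hs

theorem signChange_mul_self (k : Fin 4) : signChange s k * signChange s k = 1 := by
  rw [signChange, ← map_mul, (hs.commute_zero_leaf k).symm.mul_mul_mul_comm, hs.mul_self,
    hs.leaf_mul_self, one_mul, map_one]

theorem commute_signChange (i k : Fin 4) : Commute (signChange s i) (signChange s k) := by
  refine Commute.map (Commute.mul_left ?_ ?_) _
  · exact (Commute.refl _).mul_right (hs.commute_zero_leaf k)
  · exact (hs.commute_zero_leaf i).symm.mul_right (hs.commute_leaf i k)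

theorem commute_signChange_one (k : Fin 4) : Commute (signChange s k) (s 1) := by
  have conj_leaf_three : MulAut.conj (leaf s 3 * s 1) (leaf s 3) = s 1 := by
    rw [MulAut.conj_apply, mul_inv_eq_iff_eq_mul, hs.braid_leaf, mul_assoc]
  rw [signChange]
  simpa only [conj_leaf_three] using
    ((hs.commute_zero_leaf 3).mul_left (hs.commute_leaf k 3)).map (MulAut.conj (leaf s 3 * s 1))

theorem conj_conj_of_commute {x : G} (hx : Commute (leaf s 3) x) :
    MulAut.conj (leaf s 3 * s 1) (MulAut.conj (s 1) x) = x := by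
  rw [← MulAut.mul_apply, ← map_mul, mul_assoc, hs.mul_self, mul_one, MulAut.conj_apply, hx.eq,
    mul_inv_cancel_right]

theorem semiconjBy_signChange_zero (k : Fin 4) :
    SemiconjBy (signChange s k) (s 0) (leaf s k) := by
  have h : SemiconjBy (s 0 * leaf s k) (MulAut.conj (s 1) (s 0)) (MulAut.conj (s 1) (leaf s k)) :=
    calc s 0 * leaf s k * MulAut.conj (s 1) (s 0)
        = leaf s k * s 0 * (s 0 * s 1 * s 0) := by
          rw [(hs.commute_zero_leaf k).eq, MulAut.conj_apply, hs.inv_eq_self, hs.braid rfl]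
      _ = leaf s k * s 1 * s 0 := by
          simp only [mul_assoc, ← mul_assoc (s 0) (s 0), hs.mul_self, one_mul]
      _ = leaf s k * s 1 * leaf s k * (leaf s k * s 0) := by
          simp only [mul_assoc, ← mul_assoc (leaf s k) (leaf s k), hs.leaf_mul_self, one_mul]
      _ = MulAut.conj (s 1) (leaf s k) * (s 0 * leaf s k) := by
          rw [(hs.commute_zero_leaf k).eq, MulAut.conj_apply, hs.inv_eq_self, hs.braid_leaf]
  rw [signChange]
  simpa only [hs.conj_conj_of_commute (hs.commute_zero_leaf 3).symm,
    hs.conj_conj_of_commute (hs.commute_leaf 3 k)] using h.map (MulAut.conj (leaf s 3 * s 1))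

theorem semiconjBy_signChange_leaf (k : Fin 4) :
    SemiconjBy (signChange s k) (leaf s k) (s 0) := by
  have h := (hs.semiconjBy_signChange_zero k).inv_symm_left
  rwa [inv_eq_of_mul_eq_one_left (hs.signChange_mul_self k)] at h

theorem commute_leaf_of_swap_eq {i : Fin 3} {k : Fin 4}
    (hk : swap i.castSucc i.succ k = k) : Commute (s (i.natAdd 3)) (leaf s k) := by
  have h := hs.conj_leaf i k
  rwa [hk, MulAut.conj_apply, mul_inv_eq_iff_eq_mul] at h

theorem conj_signChange {i : Fin 3} (hi : swap i.castSucc i.succ 3 = 3) (k : Fin 4) :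
    MulAut.conj (s (i.natAdd 3)) (signChange s k) = signChange s (swap i.castSucc i.succ k) := by
  have h0 : Commute (s (i.natAdd 3)) (s 0) := hs.commute_natAdd i 0
  have h : Commute (s (i.natAdd 3)) (leaf s 3 * s 1) :=
    (hs.commute_leaf_of_swap_eq hi).mul_right (hs.commute_natAdd i 1)
  rw [signChange, ← MulAut.mul_apply, ← map_mul, h.eq, map_mul MulAut.conj, MulAut.mul_apply,
    map_mul (MulAut.conj (s (i.natAdd 3))), MulAut.conj_apply _ (s 0), h0.eq,
    mul_inv_cancel_right, hs.conj_leaf, signChange]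

end IsCoxeterFamily

end SignChanges

section Poles

variable {G X : Type*} [Group G] [MulAction G X]

theorem smul_smul_of_semiconjBy {t g g' : G} (h : SemiconjBy t g g') (x : X) :
    t • g • x = g' • t • x := by
  rw [smul_smul, h.eq, mul_smul]

/-- Elements carrying the pole `0` of a frame of four axes to the axis `k`; they represent the
cosets of `⟨s 1, s 0⟩` in the symmetric group `⟨leaf s 3, s 1, s 0⟩`. -/
def toAxis (s : Fin 6 → G) : Fin 4 → G :=
  cosetRep ![leaf s 3, s 1, s 0]

/-- Elements carrying the frame `0` to the frame `j`; they represent the cosets of `⟨s 4, s 3⟩` in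
the symmetric group `⟨s 5, s 4, s 3⟩`. -/
def toFrame (s : Fin 6 → G) : Fin 4 → G :=
  cosetRep ![s 5, s 4, s 3]

theorem map_toAxis {H : Type*} [Group H] (f : G →* H) (s : Fin 6 → G) (k : Fin 4) :
    f (toAxis s k) = toAxis (f ∘ s) k := by
  rw [toAxis, map_cosetRep, toAxis, ← map_leaf]
  congr 1
  ext1 i
  fin_cases i <;> rfl

theorem map_toFrame {H : Type*} [Group H] (f : G →* H) (s : Fin 6 → G) (j : Fin 4) :
    f (toFrame s j) = toFrame (f ∘ s) j := by
  rw [toFrame, map_cosetRep, toFrame]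
  congr 1
  ext1 i
  fin_cases i <;> rfl

namespace IsCoxeterFamily

variable {s : Fin 6 → G} (hs : IsCoxeterFamily s)
include hs

theorem mul_toAxis (i : Fin 3) (k : Fin 4) : ∃ t ∈ ({1, s 1, s 0} : Set G),
    (![leaf s 3, s 1, s 0] : Fin 3 → G) i * toAxis s k =
      toAxis s (swap i.castSucc i.succ k) * t := by
  refine mul_cosetRep (p := ![leaf s 3, s 1, s 0]) ?_ (hs.braid_leaf 3) (hs.braid rfl)
    (hs.commute_zero_leaf 3).symm i k
  simp [Fin.forall_fin_succ, hs.mul_self, hs.leaf_mul_self]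

theorem mul_toFrame (i : Fin 3) (j : Fin 4) : ∃ t ∈ ({1, s 4, s 3} : Set G),
    (![s 5, s 4, s 3] : Fin 3 → G) i * toFrame s j =
      toFrame s (swap i.castSucc i.succ j) * t := by
  refine mul_cosetRep (p := ![s 5, s 4, s 3]) ?_ (hs.braid rfl) (hs.braid rfl)
    (hs.commute rfl) i j
  simp [Fin.forall_fin_succ, hs.mul_self]

theorem commute_toAxis {i : Fin 3} (hi : swap i.castSucc i.succ 3 = 3) (k : Fin 4) :
    Commute (s (i.natAdd 3)) (toAxis s k) := by
  refine commute_cosetRep (fun l ↦ ?_) k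
  fin_cases l
  exacts [hs.commute_leaf_of_swap_eq hi, hs.commute_natAdd i 1, hs.commute_natAdd i 0]

theorem commute_toFrame (i : Fin 2) (j : Fin 4) : Commute (s (i.castAdd 4)) (toFrame s j) := by
  refine commute_cosetRep (fun l ↦ ?_) j
  fin_cases l
  exacts [(hs.commute_natAdd 2 i).symm, (hs.commute_natAdd 1 i).symm, (hs.commute_natAdd 0 i).symm]

theorem leaf_mul_toAxis (i k : Fin 4) :
    ∃ k', ∃ t ∈ ({leaf s i, signChange s i} : Set G), leaf s i * toAxis s k = toAxis s k' * t := by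
  have h2 : toAxis s 2 = s 1 * leaf s 3 := rfl
  have h3 : toAxis s 3 = s 0 * s 1 * leaf s 3 := rfl
  have h23 : toAxis s 2 * signChange s i = leaf s i * toAxis s 3 := by
    simp only [h2, h3, signChange, MulAut.conj_apply, (hs.commute_zero_leaf i).eq, mul_inv_rev,
      hs.inv_eq_self, hs.leaf_inv, mul_assoc]
    simp only [← mul_assoc (leaf s 3) (leaf s 3), ← mul_assoc (s 1) (s 1), hs.leaf_mul_self,
      hs.mul_self, one_mul]
  have h32 : toAxis s 3 * signChange s i = leaf s i * toAxis s 2 := by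
    simp only [h2, h3, signChange, MulAut.conj_apply, mul_inv_rev, hs.inv_eq_self, hs.leaf_inv,
      mul_assoc]
    simp only [← mul_assoc (leaf s 3) (leaf s 3), ← mul_assoc (s 1) (s 1), ← mul_assoc (s 0) (s 0),
      hs.leaf_mul_self, hs.mul_self, one_mul]
  fin_cases k
  · exact ⟨0, leaf s i, by simp, (Commute.one_right _).eq⟩
  · exact ⟨1, leaf s i, by simp, (hs.commute_leaf i 3).eq⟩
  · exact ⟨3, signChange s i, by simp, h32.symm⟩
  · exact ⟨2, signChange s i, by simp, h23.symm⟩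

theorem two_mul_toFrame (j : Fin 4) :
    ∃ t ∈ ({s 2, leaf s 3} : Set G), s 2 * toFrame s j = toFrame s j * t := by
  have h4 := hs.commute (i := 2) (j := 4) rfl
  have h5 := hs.commute (i := 2) (j := 5) rfl
  fin_cases j
  · exact ⟨s 2, by simp, (Commute.one_right _).eq⟩
  · exact ⟨s 2, by simp, h5.eq⟩
  · exact ⟨s 2, by simp, (h4.mul_right h5).eq⟩
  · have h : toFrame s 3 * cosetRep (fun i : Fin 3 ↦ s (i.natAdd 3)) 3 = 1 := by
      change s 3 * s 4 * s 5 * (s 5 * s 4 * s 3) = 1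
      simp only [mul_assoc, ← mul_assoc (s 5) (s 5), ← mul_assoc (s 4) (s 4), hs.mul_self, one_mul]
    refine ⟨leaf s 3, by simp, ?_⟩
    change s 2 * toFrame s 3 = toFrame s 3 * leaf s 3
    rw [leaf, MulAut.conj_apply, ← eq_inv_of_mul_eq_one_left h, ← mul_assoc, ← mul_assoc, h,
      one_mul]

end IsCoxeterFamily

/-- A set of candidate poles of frame `0`: points fixed by the symmetric group that permutes the
other axes, stable under the permutations of coordinates and the sign changes that fix the pole. -/
structure IsPoleSet (s : Fin 6 → G) (Ψ : Set X) : Prop where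
  zero_smul : ∀ ψ ∈ Ψ, s 0 • ψ = ψ
  one_smul : ∀ ψ ∈ Ψ, s 1 • ψ = ψ
  two_smul : ∀ ψ ∈ Ψ, s 2 • ψ = ψ
  three_smul_mem : ∀ ψ ∈ Ψ, s 3 • ψ ∈ Ψ
  four_smul_mem : ∀ ψ ∈ Ψ, s 4 • ψ ∈ Ψ
  signChange_smul_mem : ∀ ψ ∈ Ψ, signChange s 0 • ψ ∈ Ψ

/-- The points reached from a pole set by moving the pole within frame `0`. -/
def frameSet (s : Fin 6 → G) (Ψ : Set X) : Set X :=
  {x | ∃ k, ∃ ψ ∈ Ψ, toAxis s k • ψ = x}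

namespace IsPoleSet

variable {s : Fin 6 → G} {Ψ : Set X} (hΨ : IsPoleSet s Ψ) (hs : IsCoxeterFamily s)
include hΨ hs

theorem axis_smul_mem_frameSet (i : Fin 3) {x : X} (hx : x ∈ frameSet s Ψ) :
    (![leaf s 3, s 1, s 0] : Fin 3 → G) i • x ∈ frameSet s Ψ := by
  obtain ⟨k, ψ, hψ, rfl⟩ := hx
  obtain ⟨t, ht, h⟩ := hs.mul_toAxis i k
  refine ⟨swap i.castSucc i.succ k, ψ, hψ, ?_⟩
  have htψ : t • ψ = ψ := by
    obtain rfl | rfl | rfl := ht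
    exacts [_root_.one_smul G ψ, hΨ.one_smul ψ hψ, hΨ.zero_smul ψ hψ]
  rw [smul_smul, h, mul_smul, htψ]

theorem two_smul_mem_frameSet {x : X} (hx : x ∈ frameSet s Ψ) : s 2 • x ∈ frameSet s Ψ := by
  obtain ⟨k, ψ, hψ, rfl⟩ := hx
  obtain ⟨k', t, ht, h⟩ := hs.leaf_mul_toAxis 0 k
  refine ⟨k', t • ψ, ?_, by rw [← leaf_zero s, smul_smul, smul_smul, h]⟩
  obtain rfl | rfl := ht
  · rwa [leaf_zero, hΨ.two_smul ψ hψ]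
  · exact hΨ.signChange_smul_mem ψ hψ

theorem three_smul_mem_frameSet {x : X} (hx : x ∈ frameSet s Ψ) : s 3 • x ∈ frameSet s Ψ := by
  obtain ⟨k, ψ, hψ, rfl⟩ := hx
  exact ⟨k, s 3 • ψ, hΨ.three_smul_mem ψ hψ,
    (smul_smul_of_semiconjBy (hs.commute_toAxis (i := 0) rfl k) ψ).symm⟩

theorem four_smul_mem_frameSet {x : X} (hx : x ∈ frameSet s Ψ) : s 4 • x ∈ frameSet s Ψ := by
  obtain ⟨k, ψ, hψ, rfl⟩ := hx
  exact ⟨k, s 4 • ψ, hΨ.four_smul_mem ψ hψ,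
    (smul_smul_of_semiconjBy (hs.commute_toAxis (i := 1) rfl k) ψ).symm⟩

theorem exists_toFrame_smul_eq_smul (i : Fin 6) (j : Fin 4) {y : X} (hy : y ∈ frameSet s Ψ) :
    ∃ j', ∃ y' ∈ frameSet s Ψ, toFrame s j' • y' = s i • toFrame s j • y := by
  have small (i : Fin 2) : ∃ j', ∃ y' ∈ frameSet s Ψ,
      toFrame s j' • y' = s (i.castAdd 4) • toFrame s j • y := by
    refine ⟨j, s (i.castAdd 4) • y, ?_,
      (smul_smul_of_semiconjBy (hs.commute_toFrame i j) y).symm⟩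
    fin_cases i
    exacts [hΨ.axis_smul_mem_frameSet hs 2 hy, hΨ.axis_smul_mem_frameSet hs 1 hy]
  have large (i : Fin 3) : ∃ j', ∃ y' ∈ frameSet s Ψ,
      toFrame s j' • y' = (![s 5, s 4, s 3] : Fin 3 → G) i • toFrame s j • y := by
    obtain ⟨t, ht, h⟩ := hs.mul_toFrame i j
    refine ⟨swap i.castSucc i.succ j, t • y, ?_, by rw [smul_smul, smul_smul, h]⟩
    obtain rfl | rfl | rfl := ht
    · rwa [_root_.one_smul]
    · exact hΨ.four_smul_mem_frameSet hs hy
    · exact hΨ.three_smul_mem_frameSet hs hy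
  have middle : ∃ j', ∃ y' ∈ frameSet s Ψ, toFrame s j' • y' = s 2 • toFrame s j • y := by
    obtain ⟨t, ht, h⟩ := hs.two_mul_toFrame j
    refine ⟨j, t • y, ?_, by rw [smul_smul, smul_smul, h]⟩
    obtain rfl | rfl := ht
    · exact hΨ.two_smul_mem_frameSet hs hy
    · exact hΨ.axis_smul_mem_frameSet hs 0 hy
  fin_cases i
  exacts [small 0, small 1, middle, large 2, large 1, large 0]

/-- The set of points in the statement is stable under all generators. -/
theorem exists_toFrame_smul [IsPretransitive G X] (hne : Ψ.Nonempty)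
    (hgen : Subgroup.closure (Set.range s) = ⊤) (x : X) :
    ∃ j k, ∃ ψ ∈ Ψ, toFrame s j • toAxis s k • ψ = x := by
  obtain ⟨ψ₀, hψ₀⟩ := hne
  obtain ⟨g, rfl⟩ := exists_smul_eq G ψ₀ x
  suffices ∃ j, ∃ y ∈ frameSet s Ψ, toFrame s j • y = g • ψ₀ by
    obtain ⟨j, y, ⟨k, ψ, hψ, rfl⟩, h⟩ := this
    exact ⟨j, k, ψ, hψ, h⟩
  have hg : g ∈ Subgroup.closure (Set.range s) := hgen ▸ Subgroup.mem_top g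
  induction hg using Subgroup.closure_induction_left with
  | one => exact ⟨0, ψ₀, ⟨0, ψ₀, hψ₀, _root_.one_smul G ψ₀⟩, rfl⟩
  | mul_left _ hi g _ ih =>
    obtain ⟨i, rfl⟩ := hi
    obtain ⟨j, y, hy, h⟩ := ih
    rw [mul_smul, ← h]
    exact hΨ.exists_toFrame_smul_eq_smul hs i j hy
  | inv_mul_cancel _ hi g _ ih =>
    obtain ⟨i, rfl⟩ := hi
    obtain ⟨j, y, hy, h⟩ := ih
    rw [mul_smul, ← h, hs.inv_eq_self]
    exact hΨ.exists_toFrame_smul_eq_smul hs i j hy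

end IsPoleSet

end Poles

section Fixed

variable {G X : Type*} [Group G] [MulAction G X]

/-- A pole of frame `0`: a point fixed by `s 0`, by `s 1` and by the leaves other than `leaf s 3`,
which permute the remaining axes. -/
structure IsPole (s : Fin 6 → G) (p : X) : Prop where
  zero_smul : s 0 • p = p
  one_smul : s 1 • p = p
  leaf_smul : ∀ k ≠ 3, leaf s k • p = p

theorem isPole_of_smul_eq {s : Fin 6 → G} {p : X} (h : ∀ i : Fin 5, s i.castSucc • p = p) :
    IsPole s p := by
  have h2 : s 2 • p = p := h 2
  have h3 : s 3 • p = p := h 3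
  have h4 : s 4 • p = p := h 4
  have inv_smul {g : G} (h : g • p = p) : g⁻¹ • p = p := inv_smul_eq_iff.2 h.symm
  refine ⟨h 0, h 1, fun k hk ↦ ?_⟩
  fin_cases k
  · simp [leaf, cosetRep, h2]
  · simp [leaf, cosetRep, mul_smul, h2, h3, inv_smul]
  · simp [leaf, cosetRep, mul_smul, h2, h3, h4, inv_smul]
  · exact absurd rfl hk

namespace IsPole

variable {s : Fin 6 → G} {p : X} (hp : IsPole s p) (hs : IsCoxeterFamily s)
include hp hs

theorem zero_smul_signChange_smul {k : Fin 4} (hk : k ≠ 3) :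
    s 0 • signChange s k • p = signChange s k • p := by
  rw [← smul_smul_of_semiconjBy (hs.semiconjBy_signChange_leaf k), hp.leaf_smul k hk]

theorem one_smul_signChange_smul (k : Fin 4) :
    s 1 • signChange s k • p = signChange s k • p := by
  rw [← smul_smul_of_semiconjBy (hs.commute_signChange_one k), hp.one_smul]

theorem leaf_smul_signChange_smul (k : Fin 4) :
    leaf s k • signChange s k • p = signChange s k • p := by
  rw [← smul_smul_of_semiconjBy (hs.semiconjBy_signChange_zero k), hp.zero_smul]

end IsPole

namespace IsCoxeterFamily

variable {s : Fin 6 → G} (hs : IsCoxeterFamily s)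
include hs

theorem palindrome_one_eq :
    s 1 * s 2 * s 3 * s 2 * s 1 = MulAut.conj (s 1) (leaf s 0 * leaf s 1) * s 3 := by
  have h1 : leaf s 1 = s 3 * s 2 * s 3 := by simp [leaf, cosetRep, hs.inv_eq_self]
  have h31 : Commute (s 3) (s 1) := hs.commute rfl
  simp only [leaf_zero, h1, MulAut.conj_apply, hs.inv_eq_self, mul_assoc, ← h31.eq,
    ← mul_assoc (s 3) (s 3), hs.mul_self, one_mul]

theorem palindrome_four_eq : s 4 * s 3 * s 2 * s 3 * s 4 = leaf s 2 := by
  simp [leaf, cosetRep, hs.inv_eq_self, mul_assoc]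

theorem conj_leaf_mul_leaf_mul_self (g : G) (i j : Fin 4) :
    MulAut.conj g (leaf s i * leaf s j) * MulAut.conj g (leaf s i * leaf s j) = 1 := by
  rw [← map_mul, (hs.commute_leaf j i).mul_mul_mul_comm, hs.leaf_mul_self, hs.leaf_mul_self,
    one_mul, map_one]

theorem commute_three_conj_leaf_zero_mul_leaf_one :
    Commute (s 3) (MulAut.conj (s 1) (leaf s 0 * leaf s 1)) := by
  have h0 : MulAut.conj (s 3) (leaf s 0) = leaf s 1 := hs.conj_leaf 0 0
  have h1 : MulAut.conj (s 3) (leaf s 1) = leaf s 0 := hs.conj_leaf 0 1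
  have h : MulAut.conj (s 3) (leaf s 0 * leaf s 1) = leaf s 0 * leaf s 1 := by
    rw [map_mul, h0, h1, (hs.commute_leaf 1 0).eq]
  rw [MulAut.conj_apply, mul_inv_eq_iff_eq_mul] at h
  have h31 : Commute (s 3) (s 1) := hs.commute rfl
  exact (h31.mul_right h).mul_right h31.inv_right

theorem commute_leaf_two_of_extraRelator (h : extraRelator s ^ 2 = 1) :
    Commute (MulAut.conj (MulAut.conj (s 1) (leaf s 0 * leaf s 1)) (s 0)) (leaf s 2) := by
  set y := MulAut.conj (s 1) (leaf s 0 * leaf s 1) with hy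
  have hyy : y * y = 1 := hs.conj_leaf_mul_leaf_mul_self _ _ _
  have h3y : Commute (s 3) y := hs.commute_three_conj_leaf_zero_mul_leaf_one
  have h32 : Commute (s 3) (leaf s 2) := hs.commute_leaf_of_swap_eq (i := 0) rfl
  have hz : y * s 3 * leaf s 2 * (y * s 3) = MulAut.conj y (leaf s 2) := by
    rw [MulAut.conj_apply, inv_eq_of_mul_eq_one_left hyy, mul_assoc y, h32.eq, ← h3y.eq]
    simp only [mul_assoc, ← mul_assoc (s 3) (s 3), hs.mul_self, one_mul]
  rw [extraRelator, hs.palindrome_one_eq, hs.palindrome_four_eq, ← hy, mul_assoc (s 0),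
    mul_assoc (s 0), hz] at h
  have h0z : Commute (s 0) (MulAut.conj y (leaf s 2)) :=
    commute_of_mul_sq_eq_one (hs.mul_self 0) (by rw [← map_mul, hs.leaf_mul_self, map_one]) h
  simpa only [← MulAut.mul_apply, ← map_mul, hyy, map_one, MulAut.one_apply] using
    h0z.map (MulAut.conj y)

theorem commute_leaf_of_extraRelator (h : extraRelator s ^ 2 = 1) {i j k : Fin 4} (hij : i ≠ j)
    (hik : i ≠ k) (hjk : j ≠ k) :
    Commute (MulAut.conj (MulAut.conj (s 1) (leaf s i * leaf s j)) (s 0)) (leaf s k) := by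
  have three_transitive : ∀ i j k : Fin 4, i ≠ j → i ≠ k → j ≠ k →
      ∃ σ : Perm (Fin 4), σ 0 = i ∧ σ 1 = j ∧ σ 2 = k := by decide
  obtain ⟨σ, rfl, rfl, rfl⟩ := three_transitive i j k hij hik hjk
  obtain ⟨g, g0, g1, hg⟩ := hs.exists_conj_leaf σ
  have conj_conj (x y : G) :
      MulAut.conj g (MulAut.conj x y) = MulAut.conj (MulAut.conj g x) (MulAut.conj g y) := by
    simp [mul_assoc]
  have conj_of_commute {x : G} (hx : Commute g x) : MulAut.conj g x = x := by
    rw [MulAut.conj_apply, hx.eq, mul_inv_cancel_right]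
  simpa only [conj_conj, map_mul (MulAut.conj g), hg, conj_of_commute g0, conj_of_commute g1]
    using (hs.commute_leaf_two_of_extraRelator h).map (MulAut.conj g)

theorem commute_leaf_mul_leaf_of_extraRelator_rev
    (h : extraRelator (s ∘ Fin.rev) ^ 2 = 1) :
    Commute (leaf s 2 * leaf s 3) (MulAut.conj (s 1) (leaf s 0 * leaf s 1)) := by
  set y := MulAut.conj (s 1) (leaf s 0 * leaf s 1) with hy
  have hyy : y * y = 1 := hs.conj_leaf_mul_leaf_mul_self _ _ _
  have h5y : Commute (s 5) y := by
    have h51 : Commute (s 5) (s 1) := hs.commute rfl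
    exact (h51.mul_right ((hs.commute_leaf_of_swap_eq (i := 2) rfl).mul_right
      (hs.commute_leaf_of_swap_eq (i := 2) rfl))).mul_right h51.inv_right
  have h53 : Commute (s 5) (s 3) := hs.commute rfl
  have h32 : Commute (s 3) (leaf s 2) := hs.commute_leaf_of_swap_eq (i := 0) rfl
  have h3w : Commute (s 3) (MulAut.conj (leaf s 2) y) :=
    (h32.mul_right hs.commute_three_conj_leaf_zero_mul_leaf_one).mul_right h32.inv_right
  have hw : leaf s 2 * (y * s 3) * leaf s 2 = MulAut.conj (leaf s 2) y * s 3 := by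
    simp only [mul_assoc, h32.eq, MulAut.conj_apply, hs.leaf_inv]
  have hww : MulAut.conj (leaf s 2) y * MulAut.conj (leaf s 2) y = 1 := by
    rw [← map_mul, hyy, map_one]
  change (s 5 * (s 4 * s 3 * s 2 * s 3 * s 4) * (s 1 * s 2 * s 3 * s 2 * s 1) *
    (s 4 * s 3 * s 2 * s 3 * s 4)) ^ 2 = 1 at h
  rw [hs.palindrome_one_eq, hs.palindrome_four_eq, ← hy, mul_assoc (s 5), mul_assoc (s 5), hw] at h
  have h5w3 : Commute (s 5) (MulAut.conj (leaf s 2) y * s 3) :=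
    commute_of_mul_sq_eq_one (hs.mul_self 5)
      (by rw [h3w.mul_mul_mul_comm, hww, hs.mul_self, one_mul]) h
  have h5w : Commute (s 5) (MulAut.conj (leaf s 2) y) := by
    simpa only [mul_inv_cancel_right] using h5w3.mul_right h53.inv_right
  have h523 : SemiconjBy (s 5) (leaf s 2) (leaf s 3) := mul_inv_eq_iff_eq_mul.1 (hs.conj_leaf 2 2)
  have hconj : MulAut.conj (leaf s 2) y = MulAut.conj (leaf s 3) y :=
    mul_right_cancel (h5w.eq.symm.trans ((h523.mul_right h5y).mul_right h523.inv_right).eq)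
  have h : MulAut.conj (leaf s 2 * leaf s 3) y = y := by
    rw [map_mul, MulAut.mul_apply, ← hconj, ← MulAut.mul_apply, ← map_mul, hs.leaf_mul_self,
      map_one, MulAut.one_apply]
  exact mul_inv_eq_iff_eq_mul.1 h

end IsCoxeterFamily

namespace IsPole

variable {s : Fin 6 → G} {p : X} (hp : IsPole s p) (hs : IsCoxeterFamily s)
include hp hs

/-- The left factor is the reflection of the extra relation for the leaves `leaf s 3` and
`leaf s k`. -/
theorem conj_conj_smul {k : Fin 4} (hk : k ≠ 3) :
    MulAut.conj (MulAut.conj (s 1) (leaf s 3 * leaf s k)) (s 0) • p =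
      leaf s 3 • signChange s k • p := by
  have hbraid : s 1 * s 0 * s 1 = s 0 * s 1 * s 0 := hs.braid rfl
  have hfix : (s 0 * leaf s k * leaf s 3) • p = leaf s 3 • p := by
    rw [← ((hs.commute_zero_leaf 3).symm.mul_right (hs.commute_leaf 3 k)).eq, mul_smul, mul_smul,
      hp.leaf_smul k hk, hp.zero_smul]
  calc MulAut.conj (MulAut.conj (s 1) (leaf s 3 * leaf s k)) (s 0) • p
      = (s 1 * leaf s 3 * leaf s k * (s 1 * s 0 * s 1) * leaf s k * leaf s 3) • s 1 • p := by
        simp only [MulAut.conj_apply, mul_inv_rev, hs.inv_eq_self, hs.leaf_inv, smul_smul,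
          mul_assoc]
    _ = (s 1 * leaf s 3 * leaf s k * s 0 * s 1) • (s 0 * leaf s k * leaf s 3) • p := by
        rw [hp.one_smul, hbraid, smul_smul]
        simp only [mul_assoc]
    _ = (s 1 * leaf s 3 * s 1 * leaf s 3) • signChange s k • p := by
        rw [hfix, signChange, smul_smul, smul_smul, (hs.commute_zero_leaf k).eq]
        simp only [MulAut.conj_apply, mul_inv_rev, hs.inv_eq_self, hs.leaf_inv, mul_assoc,
          ← mul_assoc (leaf s 3) (leaf s 3), ← mul_assoc (s 1) (s 1), hs.leaf_mul_self,
          hs.mul_self, one_mul]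
    _ = leaf s 3 • s 1 • signChange s k • p := by
        rw [← hs.braid_leaf, mul_assoc _ (leaf s 3) (leaf s 3), hs.leaf_mul_self, mul_one, mul_smul]
    _ = leaf s 3 • signChange s k • p := by rw [hp.one_smul_signChange_smul hs]

theorem leaf_smul_signChange_smul_of_extraRelator
    (h : extraRelator s ^ 2 = 1) {i k : Fin 4} (hi : i ≠ 3) (hk : k ≠ 3) :
    leaf s k • signChange s i • p = signChange s i • p := by
  obtain rfl | hik := eq_or_ne i k
  · exact hp.leaf_smul_signChange_smul hs i
  · have hcomm := smul_smul_of_semiconjBy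
      (hs.commute_leaf_of_extraRelator h hi.symm hk.symm hik).symm p
    rw [hp.leaf_smul k hk, hp.conj_conj_smul hs hi,
      smul_smul_of_semiconjBy (hs.commute_leaf k 3)] at hcomm
    exact smul_left_cancel _ hcomm

theorem signChange_zero_smul_eq_of_extraRelator_rev
    (h : extraRelator (s ∘ Fin.rev) ^ 2 = 1) :
    signChange s 0 • p = signChange s 1 • p := by
  have hcomm : Commute (MulAut.conj (s 1) (leaf s 2 * leaf s 3)) (leaf s 0 * leaf s 1) := by
    simpa only [← MulAut.mul_apply, ← map_mul, hs.mul_self, map_one, MulAut.one_apply] using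
      (hs.commute_leaf_mul_leaf_of_extraRelator_rev h).map (MulAut.conj (s 1))
  have h23 : MulAut.conj (s 1) (leaf s 2 * leaf s 3) • p = (s 1 * leaf s 3) • p := by
    rw [(hs.commute_leaf 2 3).eq, MulAut.conj_apply, hs.inv_eq_self]
    simp only [mul_smul, hp.one_smul, hp.leaf_smul 2 (by decide)]
  have h01 : leaf s 0 • (s 1 * leaf s 3) • p = leaf s 1 • (s 1 * leaf s 3) • p := by
    have h := smul_smul_of_semiconjBy hcomm p
    rw [mul_smul (leaf s 0) (leaf s 1) p, hp.leaf_smul 1 (by decide), hp.leaf_smul 0 (by decide),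
      h23, (hs.commute_leaf 0 1).eq, mul_smul (leaf s 1), ← inv_smul_eq_iff, hs.leaf_inv] at h
    exact h.symm
  simp only [signChange, MulAut.conj_apply, mul_inv_rev, hs.inv_eq_self, hs.leaf_inv, mul_smul]
    at h01 ⊢
  rw [h01]

end IsPole

end Fixed

section Model

/-- The signed axes of four frames: `(j, k, v)` is the axis `k` of the frame `j` with the vector `v`
of signs. -/
abbrev SignedAxis : Type := Fin 4 × Fin 4 × (Fin 4 → ZMod 2)

/-- Permutations of the frames; they permute the signs as well. -/
def framePerm : Perm (Fin 4) →* Perm SignedAxis where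
  toFun σ := σ.prodCongr ((Equiv.refl _).prodCongr (σ.arrowCongr (Equiv.refl (ZMod 2))))
  map_one' := rfl
  map_mul' _ _ := rfl

/-- Permutations of the axes, the same in every frame. -/
def axisPerm : Perm (Fin 4) →* Perm SignedAxis where
  toFun π := (Equiv.refl _).prodCongr (π.prodCongr (Equiv.refl _))
  map_one' := rfl
  map_mul' _ _ := rfl

theorem framePerm_apply (σ : Perm (Fin 4)) (j k : Fin 4) (v : Fin 4 → ZMod 2) :
    framePerm σ (j, k, v) = (σ j, k, v ∘ σ.symm) := rfl

theorem axisPerm_apply (π : Perm (Fin 4)) (j k : Fin 4) (v : Fin 4 → ZMod 2) :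
    axisPerm π (j, k, v) = (j, π k, v) := rfl

/-- Exchanges the axes `0` and `1` of the frame `i`, and the axes `2` and `3` of every other frame,
where it also changes their signs by `z i`. -/
def frameReflection (z : Fin 4 → Fin 4 → ZMod 2) (i : Fin 4) : SignedAxis → SignedAxis
  | (j, k, v) => if j = i then (j, swap 0 1 k, v) else (j, swap 2 3 k, if 2 ≤ k then v + z i else v)

theorem frameReflection_involutive (z : Fin 4 → Fin 4 → ZMod 2) (i : Fin 4) :
    Function.Involutive (frameReflection z i) := by
  rintro ⟨j, k, v⟩
  by_cases hj : j = i
  · simp [frameReflection, hj]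
  · fin_cases k <;>
      simp [frameReflection, hj, add_assoc, CharTwo.add_self_eq_zero, swap_apply_def]

variable {z : Fin 4 → Fin 4 → ZMod 2}

/-- The permutation of signed axes given by `frameReflection`. -/
def reflectionPerm (z : Fin 4 → Fin 4 → ZMod 2) (i : Fin 4) : Perm SignedAxis :=
  (frameReflection_involutive z i).toPerm

theorem reflectionPerm_apply_self (i k : Fin 4) (v : Fin 4 → ZMod 2) :
    reflectionPerm z i (i, k, v) = (i, swap 0 1 k, v) := if_pos rfl

theorem reflectionPerm_apply_of_ne {i j : Fin 4} (hij : j ≠ i) (k : Fin 4) (v : Fin 4 → ZMod 2) :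
    reflectionPerm z i (j, k, v) = (j, swap 2 3 k, if 2 ≤ k then v + z i else v) := if_neg hij

theorem reflectionPerm_mul_self (i : Fin 4) : reflectionPerm z i * reflectionPerm z i = 1 :=
  Equiv.ext (frameReflection_involutive z i)

theorem commute_reflectionPerm (i j : Fin 4) :
    Commute (reflectionPerm z i) (reflectionPerm z j) := by
  obtain rfl | hij := eq_or_ne i j
  · exact Commute.refl _
  ext1 ⟨l, k, v⟩
  by_cases hi : l = i
  · subst hi
    fin_cases k <;> simp [reflectionPerm_apply_self, reflectionPerm_apply_of_ne hij, swap_apply_def]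
  by_cases hj : l = j
  · subst hj
    fin_cases k <;> simp [reflectionPerm_apply_self, reflectionPerm_apply_of_ne hi, swap_apply_def]
  fin_cases k <;> simp [reflectionPerm_apply_of_ne hi, reflectionPerm_apply_of_ne hj,
    add_right_comm, swap_apply_def]

theorem commute_axisPerm_reflectionPerm (i : Fin 4) :
    Commute (axisPerm (swap 2 3)) (reflectionPerm z i) := by
  ext1 ⟨j, k, v⟩
  by_cases hj : j = i
  · subst hj
    fin_cases k <;> simp [reflectionPerm_apply_self, axisPerm_apply, swap_apply_def]
  · fin_cases k <;> simp [reflectionPerm_apply_of_ne hj, axisPerm_apply, swap_apply_def]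

theorem braid_axisPerm_reflectionPerm (i : Fin 4) :
    axisPerm (swap 1 2) * reflectionPerm z i * axisPerm (swap 1 2) =
      reflectionPerm z i * axisPerm (swap 1 2) * reflectionPerm z i := by
  ext1 ⟨j, k, v⟩
  by_cases hj : j = i
  · subst hj
    fin_cases k <;> simp [reflectionPerm_apply_self, axisPerm_apply, swap_apply_def]
  · fin_cases k <;> simp [reflectionPerm_apply_of_ne hj, axisPerm_apply, swap_apply_def, add_assoc,
      CharTwo.add_self_eq_zero]

/-- Compatibility of the sign vectors `z i` with the permutations of the frames. -/
def IsEquivariant (z : Fin 4 → Fin 4 → ZMod 2) : Prop :=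
  ∀ (σ : Perm (Fin 4)) (i : Fin 4), z (σ i) = z i ∘ σ.symm

theorem conj_reflectionPerm (hz : IsEquivariant z) (σ : Perm (Fin 4)) (i : Fin 4) :
    MulAut.conj (framePerm σ) (reflectionPerm z i) = reflectionPerm z (σ i) := by
  rw [MulAut.conj_apply, mul_inv_eq_iff_eq_mul]
  ext1 ⟨j, k, v⟩
  by_cases hj : j = i
  · subst hj
    simp [reflectionPerm_apply_self, framePerm_apply]
  · have hσ : σ j ≠ σ i := σ.injective.ne hj
    simp only [Perm.mul_apply, reflectionPerm_apply_of_ne hj, reflectionPerm_apply_of_ne hσ,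
      framePerm_apply, hz σ i]
    split_ifs <;> rfl

/-- The permutations by which the six generators act on signed axes. The only freedom in this action
lies in the vectors `z i` of changed signs. -/
def model (z : Fin 4 → Fin 4 → ZMod 2) : Fin 6 → Perm SignedAxis :=
  ![axisPerm (swap 2 3), axisPerm (swap 1 2), reflectionPerm z 0, framePerm (swap 0 1),
    framePerm (swap 1 2), framePerm (swap 2 3)]

theorem model_mul_self (i : Fin 6) : model z i * model z i = 1 := by
  have hframe (i j : Fin 4) : framePerm (swap i j) * framePerm (swap i j) = 1 := by
    rw [← map_mul, swap_mul_self, map_one]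
  have haxis (i j : Fin 4) : axisPerm (swap i j) * axisPerm (swap i j) = 1 := by
    rw [← map_mul, swap_mul_self, map_one]
  fin_cases i
  exacts [haxis 2 3, haxis 1 2, reflectionPerm_mul_self 0, hframe 0 1, hframe 1 2, hframe 2 3]

theorem commute_reflectionPerm_framePerm (hz : IsEquivariant z)
    {σ : Perm (Fin 4)} {i : Fin 4} (hσ : σ i = i) :
    Commute (reflectionPerm z i) (framePerm σ) := by
  have h := conj_reflectionPerm hz σ i
  rw [hσ, MulAut.conj_apply, mul_inv_eq_iff_eq_mul] at h
  exact h.symm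

theorem reflectionPerm_mul_framePerm_pow_four (hz : IsEquivariant z) :
    (reflectionPerm z 0 * framePerm (swap 0 1)) ^ 4 = 1 := by
  have hconj : framePerm (swap 0 1) * reflectionPerm z 0 * framePerm (swap 0 1) =
      reflectionPerm z 1 := by
    have h := conj_reflectionPerm hz (swap 0 1) 0
    rwa [MulAut.conj_apply, ← map_inv, swap_inv, swap_apply_left] at h
  calc (reflectionPerm z 0 * framePerm (swap 0 1)) ^ 4
      = (reflectionPerm z 0 * (framePerm (swap 0 1) * reflectionPerm z 0 *
          framePerm (swap 0 1))) ^ 2 := by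
        simp only [pow_succ, pow_zero, one_mul, mul_assoc]
    _ = 1 := by
        rw [hconj, pow_two, (commute_reflectionPerm 1 0).mul_mul_mul_comm,
          reflectionPerm_mul_self, reflectionPerm_mul_self, one_mul]

theorem isCoxeterFamily_model (hz : IsEquivariant z) :
    IsCoxeterFamily (model z) := by
  have sq_of_commute {i j : Fin 6} (h : Commute (model z i) (model z j)) :
      (model z i * model z j) ^ 2 = 1 := by
    rw [pow_two, h.symm.mul_mul_mul_comm, model_mul_self, model_mul_self, one_mul]
  have pow_eq_one_of_hom (φ : Perm (Fin 4) →* Perm SignedAxis) {σ τ : Perm (Fin 4)} {n : ℕ}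
      (h : (σ * τ) ^ n = 1) : (φ σ * φ τ) ^ n = 1 := by
    rw [← map_mul, ← map_pow, h, map_one]
  refine isCoxeterFamily_of_lt model_mul_self fun i j hij ↦ ?_
  fin_cases i <;> fin_cases j <;> first | exact absurd hij (by decide) | skip
  · exact pow_eq_one_of_hom axisPerm (by decide)
  · exact sq_of_commute (commute_axisPerm_reflectionPerm 0)
  · exact sq_of_commute rfl
  · exact sq_of_commute rfl
  · exact sq_of_commute rfl
  · exact mul_pow_three_eq_one_of_braid (model_mul_self 1) (model_mul_self 2)
      (braid_axisPerm_reflectionPerm 0)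
  · exact sq_of_commute rfl
  · exact sq_of_commute rfl
  · exact sq_of_commute rfl
  · exact reflectionPerm_mul_framePerm_pow_four hz
  · exact sq_of_commute (commute_reflectionPerm_framePerm hz rfl)
  · exact sq_of_commute (commute_reflectionPerm_framePerm hz rfl)
  · exact pow_eq_one_of_hom framePerm (by decide)
  · exact pow_eq_one_of_hom framePerm (by decide)
  · exact pow_eq_one_of_hom framePerm (by decide)

theorem leaf_model (hz : IsEquivariant z) (k : Fin 4) :
    leaf (model z) k = reflectionPerm z k := by
  have cosetRep_swap : ∀ k, cosetRep (fun i : Fin 3 ↦ swap i.castSucc i.succ) k 0 = k := by decide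
  have h : (fun i : Fin 3 ↦ model z (i.natAdd 3)) =
      framePerm ∘ fun i : Fin 3 ↦ swap i.castSucc i.succ := by
    ext1 i
    fin_cases i <;> rfl
  rw [leaf, h, ← map_cosetRep]
  exact (conj_reflectionPerm hz _ 0).trans (by rw [cosetRep_swap])

theorem toAxis_model_apply (hz : IsEquivariant z) (k : Fin 4)
    (v : Fin 4 → ZMod 2) : toAxis (model z) k (3, 0, v) = (3, k, v) := by
  rw [toAxis, leaf_model hz]
  fin_cases k <;> rfl

theorem toFrame_model (j : Fin 4) :
    toFrame (model z) j = framePerm (cosetRep ![swap 2 3, swap 1 2, swap 0 1] j) := by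
  rw [map_cosetRep, toFrame]
  congr 1
  ext1 i
  fin_cases i <;> rfl

theorem signChange_model_apply (hz : IsEquivariant z) {i : Fin 4}
    (hi : i ≠ 3) (v : Fin 4 → ZMod 2) : signChange (model z) i (3, 0, v) = (3, 0, v + z i) := by
  have hinv : (leaf (model z) 3 * model z 1)⁻¹ = model z 1 * leaf (model z) 3 := by
    rw [mul_inv_rev, (isCoxeterFamily_model hz).inv_eq_self, (isCoxeterFamily_model hz).leaf_inv]
  rw [signChange, MulAut.conj_apply, hinv, leaf_model hz, leaf_model hz]
  have h : reflectionPerm z i (3, 2, v) = (3, 3, v + z i) := reflectionPerm_apply_of_ne hi.symm 2 v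
  change reflectionPerm z 3 (model z 1 (model z 0 (reflectionPerm z i (3, 2, v)))) = _
  rw [h]
  rfl

theorem toFrame_toAxis_model_injective (hz : IsEquivariant z) :
    Function.Injective fun x : SignedAxis ↦
      toFrame (model z) x.1 (toAxis (model z) x.2.1 (3, 0, x.2.2)) := by
  have cosetRep_apply : ∀ j, cosetRep ![swap 2 3, swap 1 2, swap 0 1] j 3 = Fin.rev j := by decide
  rintro ⟨j, k, v⟩ ⟨j', k', v'⟩ h
  simp only [toAxis_model_apply hz, toFrame_model, framePerm_apply, cosetRep_apply, Prod.mk.injEq,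
    Fin.rev_inj] at h
  obtain ⟨rfl, rfl, h⟩ := h
  rw [(Equiv.surjective _).injective_comp_right h]

/-- The signs of the model for facets: the reflection `i` changes the sign with index `i` only. -/
def facetSigns (i : Fin 4) : Fin 4 → ZMod 2 := Pi.single i 1

/-- The signs of the model for vertices: every reflection changes all four signs, so that they act
as a single one. -/
def vertexSigns (_ : Fin 4) : Fin 4 → ZMod 2 := 1

theorem isEquivariant_facetSigns : IsEquivariant facetSigns := by
  intro σ i
  ext j
  simp [facetSigns, Pi.single_apply, Equiv.symm_apply_eq]

theorem isEquivariant_vertexSigns : IsEquivariant vertexSigns := fun _ _ ↦ rfl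

theorem extraRelator_model_facetSigns : extraRelator (model facetSigns) ^ 2 = 1 := by
  have h : ∀ x, (extraRelator (model facetSigns) ^ 2) x = x := by decide +kernel
  exact Equiv.ext h

theorem extraRelator_model_vertexSigns : extraRelator (model vertexSigns ∘ Fin.rev) ^ 2 = 1 := by
  have h : ∀ x, (extraRelator (model vertexSigns ∘ Fin.rev) ^ 2) x = x := by decide +kernel
  exact Equiv.ext h

end Model

section Index

variable {G : Type*} [Group G]

theorem index_eq_card_of_injective {ι Y : Type*} {H : Subgroup G} {t : ι → G}
    (hcover : ∀ x : G ⧸ H, ∃ i, t i • ((1 : G) : G ⧸ H) = x) {ρ : G →* Perm Y} {y : Y}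
    (hH : ∀ g ∈ H, ρ g y = y) (hinj : Function.Injective fun i ↦ ρ (t i) y) :
    H.index = Nat.card ι := by
  refine (Nat.card_congr (Equiv.ofBijective (fun i ↦ t i • ((1 : G) : G ⧸ H))
    ⟨fun i j hij ↦ hinj ?_, hcover⟩)).symm
  have hmem : (t i)⁻¹ * t j ∈ H := by
    simpa only [Quotient.smul_coe, smul_eq_mul, mul_one] using QuotientGroup.eq.1 hij
  have h := hH _ hmem
  rw [map_mul, map_inv, Perm.mul_apply, Perm.inv_eq_iff_eq] at h
  exact h.symm

/-- The subgroup generated by the first five generators. -/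
def facetSubgroup (s : Fin 6 → G) : Subgroup G :=
  Subgroup.closure {s 0, s 1, s 2, s 3, s 4}

theorem closure_eq_facetSubgroup_comp_rev (s : Fin 6 → G) :
    Subgroup.closure {s 1, s 2, s 3, s 4, s 5} = facetSubgroup (s ∘ Fin.rev) := by
  rw [facetSubgroup]
  congr 1
  ext x
  simp only [Function.comp_apply, Fin.reduceRev, Set.mem_insert_iff, Set.mem_singleton_iff]
  tauto

theorem castSucc_smul_one (s : Fin 6 → G) (i : Fin 5) :
    s i.castSucc • ((1 : G) : G ⧸ facetSubgroup s) = (1 : G) := by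
  rw [Quotient.smul_coe, smul_eq_mul, mul_one, eq_comm, QuotientGroup.eq, inv_one, one_mul]
  apply Subgroup.subset_closure
  fin_cases i <;> simp

variable {s : Fin 6 → G} {z : Fin 4 → Fin 4 → ZMod 2} {ρ : G →* Perm SignedAxis}

theorem apply_eq_self_of_mem_facetSubgroup (hρ : ρ ∘ s = model z) {g : G}
    (hg : g ∈ facetSubgroup s) : ρ g (3, 0, 0) = (3, 0, 0) := by
  have h : facetSubgroup s ≤ (stabilizer (Perm SignedAxis) ((3, 0, 0) : SignedAxis)).comap ρ := by
    rw [facetSubgroup, Subgroup.closure_le]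
    rintro _ (rfl | rfl | rfl | rfl | rfl)
    all_goals
      change (ρ ∘ s) _ (3, 0, 0) = (3, 0, 0)
      rw [hρ]
      rfl
  exact h hg

theorem index_facetSubgroup {U : Type*} {Ψ : Set (G ⧸ facetSubgroup s)} (hΨ : IsPoleSet s Ψ)
    (hs : IsCoxeterFamily s) (hgen : Subgroup.closure (Set.range s) = ⊤) (hne : Ψ.Nonempty)
    {t : U → G} (ht : ∀ ψ ∈ Ψ, ∃ u, t u • ((1 : G) : G ⧸ facetSubgroup s) = ψ)
    (hz : IsEquivariant z) (hρ : ρ ∘ s = model z)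
    {v : U → Fin 4 → ZMod 2} (hv : Function.Injective v)
    (hρt : ∀ u, ρ (t u) (3, 0, 0) = (3, 0, v u)) :
    (facetSubgroup s).index = 16 * Nat.card U := by
  rw [index_eq_card_of_injective (ι := Fin 4 × Fin 4 × U)
    (t := fun x ↦ toFrame s x.1 * toAxis s x.2.1 * t x.2.2) ?_
    (fun _ ↦ apply_eq_self_of_mem_facetSubgroup hρ) ?_]
  · simp [← mul_assoc]
  · intro x
    obtain ⟨j, k, ψ, hψ, rfl⟩ := hΨ.exists_toFrame_smul hs hne hgen x
    obtain ⟨u, rfl⟩ := ht ψ hψ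
    exact ⟨(j, k, u), by simp only [mul_smul]⟩
  · intro x y h
    have hxy := toFrame_toAxis_model_injective hz (a₁ := (x.1, x.2.1, v x.2.2))
      (a₂ := (y.1, y.2.1, v y.2.2))
      (by simpa only [map_mul, Perm.mul_apply, hρt, map_toFrame, map_toAxis, hρ] using h)
    simp only [Prod.mk.injEq, hv.eq_iff] at hxy
    exact Prod.ext hxy.1 (Prod.ext hxy.2.1 hxy.2.2)

end Index

section Facets

variable {G X : Type*} [Group G] [MulAction G X]

/-- The product of the first three sign changes with the given exponents. -/
def signChanges (s : Fin 6 → G) (n : Fin 3 → ℕ) : G :=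
  signChange s 0 ^ n 0 * signChange s 1 ^ n 1 * signChange s 2 ^ n 2

theorem signChange_zero_mul_signChanges (s : Fin 6 → G) (n : Fin 3 → ℕ) :
    signChange s 0 * signChanges s n = signChanges s ![n 0 + 1, n 1, n 2] := by
  simp [signChanges, pow_succ', mul_assoc]

namespace IsCoxeterFamily

variable {s : Fin 6 → G} (hs : IsCoxeterFamily s)
include hs

theorem semiconjBy_three_signChanges (n : Fin 3 → ℕ) :
    SemiconjBy (s 3) (signChanges s n) (signChanges s ![n 1, n 0, n 2]) := by
  have h (k : Fin 4) : SemiconjBy (s 3) (signChange s k) (signChange s (swap 0 1 k)) :=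
    mul_inv_eq_iff_eq_mul.1 (hs.conj_signChange (i := 0) rfl k)
  have h01 := ((hs.commute_signChange 0 1).pow_pow (n 1) (n 0)).eq
  change SemiconjBy _ _ (signChange s 0 ^ n 1 * signChange s 1 ^ n 0 * signChange s 2 ^ n 2)
  rw [h01]
  exact (((h 0).pow_right (n 0)).mul_right ((h 1).pow_right (n 1))).mul_right
    ((h 2).pow_right (n 2))

theorem semiconjBy_four_signChanges (n : Fin 3 → ℕ) :
    SemiconjBy (s 4) (signChanges s n) (signChanges s ![n 0, n 2, n 1]) := by
  have h (k : Fin 4) : SemiconjBy (s 4) (signChange s k) (signChange s (swap 1 2 k)) :=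
    mul_inv_eq_iff_eq_mul.1 (hs.conj_signChange (i := 1) rfl k)
  have h12 := ((hs.commute_signChange 1 2).pow_pow (n 2) (n 1)).eq
  change SemiconjBy _ _ (signChange s 0 ^ n 0 * signChange s 1 ^ n 2 * signChange s 2 ^ n 1)
  rw [signChanges, mul_assoc, mul_assoc, h12]
  exact ((h 0).pow_right (n 0)).mul_right
    (((h 1).pow_right (n 1)).mul_right ((h 2).pow_right (n 2)))

theorem signChanges_mod_two (n : Fin 3 → ℕ) :
    signChanges s (fun i ↦ n i % 2) = signChanges s n := by
  have h (i : Fin 4) (m : ℕ) : signChange s i ^ (m % 2) = signChange s i ^ m :=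
    (pow_eq_pow_mod m ((pow_two _).trans (hs.signChange_mul_self i))).symm
  simp only [signChanges, h]

end IsCoxeterFamily

theorem map_signChanges {H : Type*} [Group H] (f : G →* H) (s : Fin 6 → G) (n : Fin 3 → ℕ) :
    f (signChanges s n) = signChanges (f ∘ s) n := by
  simp only [signChanges, map_mul, map_pow, map_signChange]

theorem signChanges_model_apply {z : Fin 4 → Fin 4 → ZMod 2}
    (hz : IsEquivariant z) (n : Fin 3 → ℕ) :
    signChanges (model z) n (3, 0, 0) = (3, 0, n 0 • z 0 + n 1 • z 1 + n 2 • z 2) := by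
  have h {i : Fin 4} (hi : i ≠ 3) (m : ℕ) (v : Fin 4 → ZMod 2) :
      (signChange (model z) i ^ m) (3, 0, v) = (3, 0, v + m • z i) := by
    induction m with
    | zero => simp
    | succ m ih => rw [pow_succ', Perm.mul_apply, ih, signChange_model_apply hz hi, succ_nsmul,
        add_assoc]
  rw [signChanges, Perm.mul_apply, Perm.mul_apply, h (by decide), h (by decide), h (by decide),
    zero_add, add_comm _ (n 0 • z 0), add_comm (n 2 • z 2), add_assoc]

namespace IsPole

variable {s : Fin 6 → G} {p : X} (hp : IsPole s p) (hs : IsCoxeterFamily s)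
  (h : extraRelator s ^ 2 = 1)
include hp hs h

theorem signChange_smul {i : Fin 4} (hi : i ≠ 3) : IsPole s (signChange s i • p) where
  zero_smul := hp.zero_smul_signChange_smul hs hi
  one_smul := hp.one_smul_signChange_smul hs i
  leaf_smul _ hk := hp.leaf_smul_signChange_smul_of_extraRelator hs h hi hk

theorem signChange_pow_smul {i : Fin 4} (hi : i ≠ 3) (m : ℕ) :
    IsPole s (signChange s i ^ m • p) := by
  induction m with
  | zero => rwa [pow_zero, _root_.one_smul]
  | succ m ih =>
    rw [pow_succ', mul_smul]
    exact ih.signChange_smul hs h hi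

theorem signChanges_smul (n : Fin 3 → ℕ) : IsPole s (signChanges s n • p) := by
  rw [signChanges, mul_smul, mul_smul]
  exact ((hp.signChange_pow_smul hs h (by decide) _).signChange_pow_smul hs h (by decide)
    _).signChange_pow_smul hs h (by decide) _

end IsPole

variable {s : Fin 6 → G} (hs : IsCoxeterFamily s)
include hs

theorem isPoleSet_range_signChanges_smul (h : extraRelator s ^ 2 = 1) {p : X}
    (hp : ∀ i : Fin 5, s i.castSucc • p = p) :
    IsPoleSet s (Set.range fun n ↦ signChanges s n • p) := by
  have hpole := (isPole_of_smul_eq hp).signChanges_smul hs h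
  have h3 : s 3 • p = p := hp 3
  have h4 : s 4 • p = p := hp 4
  constructor <;> rintro _ ⟨n, rfl⟩
  · exact (hpole n).zero_smul
  · exact (hpole n).one_smul
  · rw [← leaf_zero s]
    exact (hpole n).leaf_smul 0 (by decide)
  · exact ⟨_, by rw [smul_smul_of_semiconjBy (hs.semiconjBy_three_signChanges n), h3]⟩
  · exact ⟨_, by rw [smul_smul_of_semiconjBy (hs.semiconjBy_four_signChanges n), h4]⟩
  · exact ⟨_, by rw [smul_smul, signChange_zero_mul_signChanges s n]⟩

theorem index_facetSubgroup_of_extraRelator (hgen : Subgroup.closure (Set.range s) = ⊤)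
    (h : extraRelator s ^ 2 = 1) {ρ : G →* Perm SignedAxis} (hρ : ρ ∘ s = model facetSigns) :
    (facetSubgroup s).index = 128 := by
  have facetSigns_injective : Function.Injective fun u : Fin 3 → Fin 2 ↦
      (u 0 : ℕ) • facetSigns 0 + (u 1 : ℕ) • facetSigns 1 + (u 2 : ℕ) • facetSigns 2 := by decide
  rw [index_facetSubgroup (t := fun u : Fin 3 → Fin 2 ↦ signChanges s fun i ↦ u i)
    (isPoleSet_range_signChanges_smul hs h (castSucc_smul_one s)) hs hgen
    (Set.range_nonempty _) ?_ isEquivariant_facetSigns hρ facetSigns_injective fun u ↦ ?_]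
  · simp
  · rintro _ ⟨n, rfl⟩
    refine ⟨fun i ↦ ⟨n i % 2, Nat.mod_lt _ two_pos⟩, ?_⟩
    simp only [hs.signChanges_mod_two]
  · rw [map_signChanges, hρ, signChanges_model_apply isEquivariant_facetSigns]

end Facets

section Vertices

variable {G X : Type*} [Group G] [MulAction G X] {s : Fin 6 → G} (hs : IsCoxeterFamily s)
include hs

theorem isPoleSet_pair_of_extraRelator_rev (h : extraRelator (s ∘ Fin.rev) ^ 2 = 1) {p : X}
    (hp : ∀ i : Fin 5, s i.castSucc • p = p) : IsPoleSet s {p, signChange s 0 • p} := by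
  have hpole := isPole_of_smul_eq hp
  have hp3 : s 3 • p = p := hp 3
  have hp4 : s 4 • p = p := hp 4
  have h2 : s 2 • signChange s 0 • p = signChange s 0 • p := by
    simpa only [leaf_zero] using hpole.leaf_smul_signChange_smul hs 0
  have h3 : SemiconjBy (s 3) (signChange s 0) (signChange s 1) :=
    mul_inv_eq_iff_eq_mul.1 (hs.conj_signChange (i := 0) rfl 0)
  have h4 : Commute (s 4) (signChange s 0) :=
    mul_inv_eq_iff_eq_mul.1 (hs.conj_signChange (i := 1) rfl 0)
  constructor <;> rintro _ (rfl | rfl)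
  · exact hp 0
  · exact hpole.zero_smul_signChange_smul hs (by decide)
  · exact hp 1
  · exact hpole.one_smul_signChange_smul hs 0
  · exact hp 2
  · exact h2
  · exact .inl (hp 3)
  · refine .inr ?_
    rw [smul_smul_of_semiconjBy h3, hp3, hpole.signChange_zero_smul_eq_of_extraRelator_rev hs h]
    rfl
  · exact .inl (hp 4)
  · exact .inr (by rw [smul_smul_of_semiconjBy h4, hp4]; rfl)
  · exact .inr rfl
  · exact .inl (by rw [smul_smul, hs.signChange_mul_self, one_smul])

theorem index_facetSubgroup_of_extraRelator_rev (hgen : Subgroup.closure (Set.range s) = ⊤)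
    (h : extraRelator (s ∘ Fin.rev) ^ 2 = 1) {ρ : G →* Perm SignedAxis}
    (hρ : ρ ∘ s = model vertexSigns) : (facetSubgroup s).index = 32 := by
  rw [index_facetSubgroup (t := ![1, signChange s 0]) (v := ![0, 1])
    (isPoleSet_pair_of_extraRelator_rev hs h (castSucc_smul_one s)) hs hgen ⟨_, .inl rfl⟩ ?_
    isEquivariant_vertexSigns hρ (by decide) ?_]
  · simp
  · rintro _ (rfl | rfl)
    exacts [⟨0, one_smul _ _⟩, ⟨1, rfl⟩]
  · intro u
    fin_cases u
    · simp
    · change ρ (signChange s 0) (3, 0, 0) = (3, 0, 1)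
      rw [map_signChange, hρ, signChange_model_apply isEquivariant_vertexSigns (by decide),
        zero_add]
      rfl

end Vertices

section Theta

theorem isCoxeterFamily_th' : IsCoxeterFamily th' := by
  intro i j
  have h : (w i * w j) ^ cox6 i j = 1 := PresentedGroup.one_of_mem ⟨(i, j), rfl⟩
  exact congrArg (QuotientGroup.mk' _) h

theorem extraRelator_th'_sq : extraRelator th' ^ 2 = 1 :=
  (QuotientGroup.eq_one_iff ((w 0 * sg * tu * sg) ^ 2)).2 (Subgroup.subset_normalClosure rfl)

theorem closure_range_th' : Subgroup.closure (Set.range th') = ⊤ := by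
  have h := congrArg (Subgroup.map (QuotientGroup.mk' (Subgroup.normalClosure
    ({(w 0 * sg * tu * sg) ^ 2} : Set W)))) (PresentedGroup.closure_range_of rels6)
  rwa [MonoidHom.map_closure, ← Set.range_comp,
    Subgroup.map_top_of_surjective _ (QuotientGroup.mk'_surjective _)] at h

theorem exists_hom_th' {G : Type*} [Group G] {s : Fin 6 → G} (hs : IsCoxeterFamily s)
    (h : extraRelator s ^ 2 = 1) : ∃ ρ : Theta' →* G, ρ ∘ th' = s := by
  have hrels : ∀ r ∈ rels6, FreeGroup.lift s r = 1 := by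
    rintro _ ⟨⟨i, j⟩, rfl⟩
    simpa using hs i j
  let φ : W →* G := PresentedGroup.toGroup hrels
  have hφ (i : Fin 6) : φ (w i) = s i := PresentedGroup.toGroup.of hrels
  have hker : Subgroup.normalClosure {(w 0 * sg * tu * sg) ^ 2} ≤ φ.ker := by
    refine Subgroup.normalClosure_le_normal (Set.singleton_subset_iff.2 ?_)
    simpa only [SetLike.mem_coe, MonoidHom.mem_ker, sg, tu, map_pow, map_mul, hφ,
      extraRelator] using h
  exact ⟨QuotientGroup.lift _ φ hker, funext hφ⟩

end Theta

/-- In Theta', the vertex stabiliser <b,...,f> has index 32 and the facet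
stabiliser <a,...,e> has index 128. -/
theorem stmt_10 :
    (Subgroup.closure ({th' 1, th' 2, th' 3, th' 4, th' 5} : Set Theta')).index = 32 ∧
    (Subgroup.closure ({th' 0, th' 1, th' 2, th' 3, th' 4} : Set Theta')).index = 128 := by
  have comp_rev_comp_rev {α : Type} (s : Fin 6 → α) : (s ∘ Fin.rev) ∘ Fin.rev = s :=
    funext fun i ↦ congrArg s i.rev_rev
  rw [closure_eq_facetSubgroup_comp_rev]
  constructor
  · obtain ⟨ρ, hρ⟩ := exists_hom_th' (isCoxeterFamily_model isEquivariant_vertexSigns).comp_rev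
      extraRelator_model_vertexSigns
    refine index_facetSubgroup_of_extraRelator_rev isCoxeterFamily_th'.comp_rev ?_ ?_ (ρ := ρ) ?_
    · rw [Fin.rev_surjective.range_comp, closure_range_th']
    · rw [comp_rev_comp_rev, extraRelator_th'_sq]
    · rw [← Function.comp_assoc, hρ, comp_rev_comp_rev]
  · obtain ⟨ρ, hρ⟩ := exists_hom_th' (isCoxeterFamily_model isEquivariant_facetSigns)
      extraRelator_model_facetSigns
    exact index_facetSubgroup_of_extraRelator isCoxeterFamily_th' closure_range_th'
      extraRelator_th'_sq hρ
end

section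
/- In Theta', the image of the element f*tau*sigma*tau has order 4, and the image of the element f*tau*sigma*tau*sigma also has order 4. (This identifies the vertex figures as tori of type {3,4,3,3}_{(2,2,0,0)}, and shows that the entries with t > 2 in the McMullen–Schulte table of universal polytopes with facets {3,3,4,3}_{(2,0,0,0)} do not arise.) -/
/-!
The facet group `⟨a, b, c, d, e⟩` and the vertex-figure group `⟨b, c, d, e, f⟩` are Euclidean
reflection groups in which `x = aστσ` and `y = fτστ` are translations. The point reflection `B` in
a tile of the facet and the point reflection `P` in the vertex satisfy
`(P B) (P eBe) (P deBed) = x⁻² · b x⁻² b`.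
Where `x² = 1`, the element `B` commutes with `τ`, hence `B`, `eBe` and `deBed` commute with `y²`.
The left-hand side then conjugates `y²` to its inverse, since `P` does and occurs three times; the
right-hand side is `1`. So `y⁴ = 1`.

Conversely, on the long roots of `W` taken modulo `4`, the element `x²` acts trivially and `y²`
does not. Finally `σ` is an involution commuting with `y`, so `(yσ)² = y²` and `yσ` has the same
order as `y`.
-/

section WordReduction

open CoxeterSystem

variable {B G : Type*} [Group G] {M : CoxeterMatrix B} (cs : CoxeterSystem M G)

theorem wordProd_pow (ω : List B) (n : ℕ) :
    cs.wordProd ω ^ n = cs.wordProd (List.replicate n ω).flatten := by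
  simp [CoxeterSystem.wordProd, List.map_flatten, List.prod_flatten]

theorem simple_mul_wordProd_reverse_alternatingWord {i j : B} (hM : M i j ≠ 0) :
    cs.simple j * cs.wordProd (alternatingWord j i (M i j - 1)).reverse =
      cs.simple i * cs.wordProd (alternatingWord i j (M i j - 1)).reverse := by
  have braid := congrArg (·⁻¹) (cs.wordProd_braidWord_eq i j)
  obtain ⟨m, hm⟩ := Nat.exists_eq_succ_of_ne_zero hM
  simpa [braidWord, M.symmetric j i, hm, alternatingWord_succ, cs.wordProd_append] using braid

theorem wordProd_eq_of_foldlM_eq_some {f : List B → B → Option (List B)}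
    (hf : ∀ i ω ω', f ω i = some ω' → cs.wordProd ω = cs.simple i * cs.wordProd ω') :
    ∀ {l ω ω' : List B}, l.foldlM f ω = some ω' →
      cs.wordProd ω = cs.wordProd l * cs.wordProd ω'
  | [], ω, ω', h => by simp_all
  | i :: l, ω, ω', h => by
    rw [List.foldlM_cons, Option.bind_eq_bind, Option.bind_eq_some_iff] at h
    obtain ⟨ν, hν, h⟩ := h
    rw [hf i ω ν hν, wordProd_eq_of_foldlM_eq_some hf h, cs.wordProd_cons, mul_assoc]

variable [DecidableEq B]

/-- Tries to turn `ω` by braid moves into a word starting with `i`, and returns the rest of that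
word. The first argument bounds the recursion depth. If `ω` starts with `j ≠ i`, its tail has to
continue with the rest of the alternating word in `j, i` for a braid move to apply. -/
def moveToFront (M : CoxeterMatrix B) : ℕ → B → List B → Option (List B)
  | 0, _, _ => none
  | _ + 1, _, [] => none
  | n + 1, i, j :: ω =>
    if i = j then some ω
    else if M i j = 0 then none
    else ((alternatingWord j i (M i j - 1)).reverse.foldlM (fun ω k => moveToFront M n k ω) ω).map
      ((alternatingWord i j (M i j - 1)).reverse ++ ·)

/-- Tits' reduction of a word: letters are added from the right, and a letter is cancelled as soon
as braid moves can place another copy of it next to it. -/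
def reduceWord (M : CoxeterMatrix B) : List B → List B
  | [] => []
  | i :: ω =>
    (moveToFront M (reduceWord M ω).length i (reduceWord M ω)).getD (i :: reduceWord M ω)

theorem wordProd_eq_of_moveToFront_eq_some (n : ℕ) (i : B) (ω ω' : List B)
    (h : moveToFront M n i ω = some ω') :
    cs.wordProd ω = cs.simple i * cs.wordProd ω' := by
  induction n generalizing i ω ω' with
  | zero => simp [moveToFront] at h
  | succ n ih =>
    obtain _ | ⟨j, ω⟩ := ω
    · simp [moveToFront] at h
    rw [moveToFront] at h
    split_ifs at h with hij hM
    · cases h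
      rw [hij, cs.wordProd_cons]
    · obtain ⟨ν, hν, rfl⟩ := Option.map_eq_some_iff.mp h
      rw [cs.wordProd_cons, wordProd_eq_of_foldlM_eq_some cs ih hν, ← mul_assoc,
        simple_mul_wordProd_reverse_alternatingWord cs hM, cs.wordProd_append, mul_assoc]

theorem wordProd_reduceWord (ω : List B) : cs.wordProd (reduceWord M ω) = cs.wordProd ω := by
  induction ω with
  | nil => rfl
  | cons i ω ih =>
    rw [reduceWord, cs.wordProd_cons, ← ih]
    cases h : moveToFront M (reduceWord M ω).length i (reduceWord M ω) with
    | none => rw [Option.getD_none, cs.wordProd_cons]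
    | some ν =>
      rw [Option.getD_some, wordProd_eq_of_moveToFront_eq_some cs _ _ _ _ h,
        cs.simple_mul_simple_cancel_left]

theorem wordProd_eq_of_reduceWord_eq_nil {ω ω' : List B}
    (h : reduceWord M (ω.reverse ++ ω') = []) : cs.wordProd ω = cs.wordProd ω' := by
  have prod_eq_one := wordProd_reduceWord cs (ω.reverse ++ ω')
  rw [h, cs.wordProd_nil, cs.wordProd_append, cs.wordProd_reverse] at prod_eq_one
  exact inv_mul_eq_one.mp prod_eq_one.symm

end WordReduction

/-- The Coxeter matrix `cox6` in bundled form. -/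
def cox6Matrix : CoxeterMatrix (Fin 6) where
  M := Matrix.of cox6
  isSymm := Matrix.IsSymm.ext (by decide : ∀ i j, cox6 j i = cox6 i j)
  diagonal := by decide
  off_diagonal := (by decide : ∀ i j, i ≠ j → cox6 i j ≠ 1)

/-- The tautological Coxeter system on `W`: its relations are those of `cox6Matrix` on the nose. -/
def coxeterW : CoxeterSystem cox6Matrix W := ⟨MulEquiv.refl W⟩

/-- The translation `aστσ` of the facet group `⟨a, b, c, d, e⟩` of type [3,3,4,3]. -/
def facetTranslation : W := w 0 * sg * tu * sg

/-- The translation `fτστ` of the vertex-figure group `⟨b, c, d, e, f⟩` of type [3,4,3,3]. -/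
def vertexTranslation : W := w 5 * tu * sg * tu

/-- The longest element of the finite group `⟨a, b, c, d⟩` of type [3,3,4], as a power of a Coxeter
element: the point reflection in the centre of a tile of the facet. -/
def tileInversion : W := (w 0 * w 1 * w 2 * w 3) ^ 4

/-- The longest element of the finite group `⟨b, c, d, e⟩` of type [3,4,3], as a power of a Coxeter
element: the point reflection in the vertex. -/
def vertexInversion : W := (w 1 * w 2 * w 3 * w 4) ^ 6

section WordIdentities

open CoxeterSystem

theorem w_eq_wordProd (i : Fin 6) : w i = coxeterW.wordProd [i] :=
  (coxeterW.wordProd_singleton i).symm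

theorem sg_eq_wordProd : sg = coxeterW.wordProd [1, 2, 3, 2, 1] := by
  simp only [sg, w_eq_wordProd, ← wordProd_append, List.cons_append, List.nil_append]

theorem tu_eq_wordProd : tu = coxeterW.wordProd [4, 3, 2, 3, 4] := by
  simp only [tu, w_eq_wordProd, ← wordProd_append, List.cons_append, List.nil_append]

theorem facetTranslation_eq_wordProd : facetTranslation = coxeterW.wordProd
    ([0] ++ [1, 2, 3, 2, 1] ++ [4, 3, 2, 3, 4] ++ [1, 2, 3, 2, 1]) := by
  simp only [facetTranslation, w_eq_wordProd, sg_eq_wordProd, tu_eq_wordProd, ← wordProd_append]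

theorem vertexTranslation_eq_wordProd : vertexTranslation = coxeterW.wordProd
    ([5] ++ [4, 3, 2, 3, 4] ++ [1, 2, 3, 2, 1] ++ [4, 3, 2, 3, 4]) := by
  simp only [vertexTranslation, w_eq_wordProd, sg_eq_wordProd, tu_eq_wordProd, ← wordProd_append]

theorem tileInversion_eq_wordProd :
    tileInversion = coxeterW.wordProd (List.replicate 4 [0, 1, 2, 3]).flatten := by
  rw [← wordProd_pow]
  simp only [tileInversion, w_eq_wordProd, ← wordProd_append, List.cons_append, List.nil_append]

theorem vertexInversion_eq_wordProd :
    vertexInversion = coxeterW.wordProd (List.replicate 6 [1, 2, 3, 4]).flatten := by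
  rw [← wordProd_pow]
  simp only [vertexInversion, w_eq_wordProd, ← wordProd_append, List.cons_append, List.nil_append]

theorem w_mul_self (i : Fin 6) : w i * w i = 1 := coxeterW.simple_mul_simple_self i

theorem sg_mul_self : sg * sg = 1 := by
  rw [sg_eq_wordProd, ← wordProd_append]
  exact wordProd_eq_of_reduceWord_eq_nil coxeterW (ω' := []) (by decide +kernel)

theorem commute_tileInversion_w {i : Fin 6} (hi : i ≠ 4) : Commute tileInversion (w i) := by
  have reduces : ∀ i : Fin 6, i ≠ 4 →
      reduceWord cox6Matrix (((List.replicate 4 [0, 1, 2, 3]).flatten ++ [i]).reverse ++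
        ([i] ++ (List.replicate 4 [0, 1, 2, 3]).flatten)) = [] := by decide +kernel
  rw [Commute, SemiconjBy, tileInversion_eq_wordProd, w_eq_wordProd]
  simp only [← wordProd_append]
  exact wordProd_eq_of_reduceWord_eq_nil coxeterW (reduces i hi)

theorem commute_tileInversion_sg : Commute tileInversion sg := by
  have commute_b := commute_tileInversion_w (i := 1) (by decide)
  have commute_c := commute_tileInversion_w (i := 2) (by decide)
  have commute_d := commute_tileInversion_w (i := 3) (by decide)
  exact (((commute_b.mul_right commute_c).mul_right commute_d).mul_right commute_c).mul_right
    commute_b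

theorem tileInversion_mul_tu :
    tileInversion * tu = sg * facetTranslation ^ 2 * sg * tu * tileInversion := by
  rw [tileInversion_eq_wordProd, sg_eq_wordProd, facetTranslation_eq_wordProd, tu_eq_wordProd]
  simp only [sq, ← wordProd_append]
  exact wordProd_eq_of_reduceWord_eq_nil coxeterW (by decide +kernel)

theorem commute_vertexTranslation_sg : Commute vertexTranslation sg := by
  rw [Commute, SemiconjBy, vertexTranslation_eq_wordProd, sg_eq_wordProd]
  simp only [← wordProd_append]
  exact wordProd_eq_of_reduceWord_eq_nil coxeterW (by decide +kernel)

theorem commute_vertexTranslation_w_three : Commute vertexTranslation (w 3) := by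
  rw [Commute, SemiconjBy, vertexTranslation_eq_wordProd, w_eq_wordProd]
  simp only [← wordProd_append]
  exact wordProd_eq_of_reduceWord_eq_nil coxeterW (by decide +kernel)

theorem w_four_mul_vertexTranslation_sq_mul_w_four :
    w 4 * vertexTranslation ^ 2 * w 4 = vertexTranslation * (tu * vertexTranslation * tu) *
      (w 1 * tu * vertexTranslation * tu * w 1) *
        (w 2 * w 1 * tu * vertexTranslation * tu * w 1 * w 2) := by
  rw [vertexTranslation_eq_wordProd, tu_eq_wordProd]
  simp only [sq, w_eq_wordProd, ← wordProd_append]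
  exact wordProd_eq_of_reduceWord_eq_nil coxeterW (by decide +kernel)

theorem semiconjBy_vertexInversion_vertexTranslation :
    SemiconjBy vertexInversion vertexTranslation vertexTranslation⁻¹ := by
  rw [SemiconjBy, vertexInversion_eq_wordProd, vertexTranslation_eq_wordProd]
  simp only [← wordProd_append, ← wordProd_reverse]
  exact wordProd_eq_of_reduceWord_eq_nil coxeterW (by decide +kernel)

theorem prod_vertexInversion_mul_conj_tileInversion :
    vertexInversion * tileInversion * (vertexInversion * (w 4 * tileInversion * w 4)) *
        (vertexInversion * (w 3 * (w 4 * tileInversion * w 4) * w 3)) =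
      (facetTranslation ^ 2)⁻¹ * (w 1 * (facetTranslation ^ 2)⁻¹ * w 1) := by
  rw [vertexInversion_eq_wordProd, tileInversion_eq_wordProd, facetTranslation_eq_wordProd]
  simp only [sq, w_eq_wordProd, ← wordProd_append, ← wordProd_reverse]
  exact wordProd_eq_of_reduceWord_eq_nil coxeterW (by decide +kernel)

end WordIdentities

section UpperBound

variable {G : Type*} [Group G]

theorem commute_conj_of_mul_self_eq_one {g a t : G} (hg : g * g = 1)
    (h : Commute a (g * t * g)) : Commute (g * a * g) t := by
  have inv_eq : g⁻¹ = g := inv_eq_of_mul_eq_one_left hg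
  have conj := (Commute.conj_iff g).mpr h
  rw [inv_eq] at conj
  simpa only [← mul_assoc, hg, one_mul, mul_assoc t, mul_one] using conj

theorem sq_eq_one_of_inverting_mul_eq_one {p b₁ b₂ b₃ t : G} (hp : SemiconjBy p t t⁻¹)
    (h₁ : Commute b₁ t) (h₂ : Commute b₂ t) (h₃ : Commute b₃ t)
    (h : p * b₁ * (p * b₂) * (p * b₃) = 1) : t ^ 2 = 1 := by
  have hp' : SemiconjBy p t⁻¹ t := by simpa only [inv_inv] using hp.inv_right
  have conj : SemiconjBy (p * b₁ * (p * b₂) * (p * b₃)) t t⁻¹ :=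
    ((hp.mul_left h₁).mul_left (hp'.mul_left h₂.inv_right)).mul_left (hp.mul_left h₃)
  rw [h, SemiconjBy, one_mul, mul_one] at conj
  rwa [sq, mul_eq_one_iff_eq_inv]

variable {φ : W →* G} (hφ : φ facetTranslation ^ 2 = 1)
include hφ

theorem commute_map_tileInversion_tu : Commute (φ tileInversion) (φ tu) := by
  have h := congrArg φ tileInversion_mul_tu
  simp only [map_mul, map_pow, hφ, mul_one] at h
  rwa [← map_mul φ sg, sg_mul_self, map_one, one_mul] at h

theorem commute_map_tileInversion_vertexTranslation :
    Commute (φ tileInversion) (φ vertexTranslation) := by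
  have commute_tu := commute_map_tileInversion_tu hφ
  have commute_f := (commute_tileInversion_w (i := 5) (by decide)).map φ
  have commute_sg := commute_tileInversion_sg.map φ
  simp only [vertexTranslation, map_mul]
  exact ((commute_f.mul_right commute_tu).mul_right commute_sg).mul_right commute_tu

theorem commute_map_tileInversion_conj_vertexTranslation_sq :
    Commute (φ tileInversion) (φ (w 4 * vertexTranslation ^ 2 * w 4)) := by
  have commute_b := (commute_tileInversion_w (i := 1) (by decide)).map φ
  have commute_c := (commute_tileInversion_w (i := 2) (by decide)).map φ
  have commute_tu := commute_map_tileInversion_tu hφ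
  have commute_translation := commute_map_tileInversion_vertexTranslation hφ
  rw [w_four_mul_vertexTranslation_sq_mul_w_four]
  simp only [map_mul]
  apply_rules [Commute.mul_right]

theorem map_vertexTranslation_pow_four : φ vertexTranslation ^ 4 = 1 := by
  have mul_self (i : Fin 6) : φ (w i) * φ (w i) = 1 := by rw [← map_mul, w_mul_self, map_one]
  have inverts : SemiconjBy (φ vertexInversion) (φ vertexTranslation ^ 2)
      (φ vertexTranslation ^ 2)⁻¹ := by
    simpa only [map_inv, inv_pow] using
      (semiconjBy_vertexInversion_vertexTranslation.map φ).pow_right 2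
  have commute_B : Commute (φ tileInversion) (φ vertexTranslation ^ 2) :=
    (commute_map_tileInversion_vertexTranslation hφ).pow_right 2
  have commute_eBe : Commute (φ (w 4) * φ tileInversion * φ (w 4)) (φ vertexTranslation ^ 2) :=
    commute_conj_of_mul_self_eq_one (mul_self 4) <| by
      simpa only [map_mul, map_pow] using commute_map_tileInversion_conj_vertexTranslation_sq hφ
  have commute_deBed : Commute (φ (w 3) * (φ (w 4) * φ tileInversion * φ (w 4)) * φ (w 3))
      (φ vertexTranslation ^ 2) := by
    have commute_d := (commute_vertexTranslation_w_three.map φ).pow_left 2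
    apply commute_conj_of_mul_self_eq_one (mul_self 3)
    rwa [← commute_d.eq, mul_assoc (φ vertexTranslation ^ 2), mul_self, mul_one]
  have prod_eq_one := congrArg φ prod_vertexInversion_mul_conj_tileInversion
  simp only [map_mul, map_inv, map_pow, hφ, inv_one, mul_one, mul_self] at prod_eq_one
  rw [pow_mul _ 2 2]
  exact sq_eq_one_of_inverting_mul_eq_one inverts commute_B commute_eBe commute_deBed prod_eq_one

end UpperBound

section ReflectionRepresentation

open Module Polynomial.Chebyshev

variable {B R V : Type*} [CommRing R] [AddCommGroup V] [Module R V]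

section

variable {x y : V} {f g : Dual R V}

theorem reflection_mul_reflection_sq_eq_one (hf : f x = 2) (hg : g y = 2)
    (hfg : f y = 0) (hgf : g x = 0) : (reflection hf * reflection hg) ^ 2 = 1 := by
  ext z
  rw [reflection_mul_reflection_pow_apply hf hg 2 z (-2) (by rw [hfg]; norm_num)]
  norm_num [hfg, hgf]
  module

theorem reflection_mul_reflection_pow_three_eq_one (hf : f x = 2) (hg : g y = 2)
    (h : f y * g x = 1) : (reflection hf * reflection hg) ^ 3 = 1 := by
  ext z
  rw [reflection_mul_reflection_pow_apply hf hg 3 z (-1) (by rw [h]; norm_num)]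
  norm_num

theorem reflection_mul_reflection_pow_four_eq_one (hf : f x = 2) (hg : g y = 2)
    (h : f y * g x = 2) : (reflection hf * reflection hg) ^ 4 = 1 := by
  ext z
  rw [reflection_mul_reflection_pow_apply hf hg 4 z 0 (by rw [h]; norm_num)]
  norm_num

theorem reflection_mul_reflection_pow_six_eq_one (hf : f x = 2) (hg : g y = 2)
    (h : f y * g x = 3) : (reflection hf * reflection hg) ^ 6 = 1 := by
  ext z
  rw [reflection_mul_reflection_pow_apply hf hg 6 z 1 (by rw [h]; norm_num)]
  norm_num [S_two]

end

/-- The simple roots `α i` and simple coroots `α' i` of a crystallographic realization of the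
Coxeter matrix `M`: the numbers `α' i (α j)` form a generalized Cartan matrix for `M`. An entry
`M i j = 0` stands for the absence of a relation. -/
structure IsCrystallographicRealization (M : CoxeterMatrix B) (α : B → V) (α' : B → Dual R V) :
    Prop where
  crystallographic : ∀ i j, M i j ∈ ({0, 1, 2, 3, 4, 6} : Finset ℕ)
  coroot_root_self : ∀ i, α' i (α i) = 2
  coroot_root_of_eq_two : ∀ i j, M i j = 2 → α' i (α j) = 0
  coroot_root_of_eq_three : ∀ i j, M i j = 3 → α' i (α j) * α' j (α i) = 1
  coroot_root_of_eq_four : ∀ i j, M i j = 4 → α' i (α j) * α' j (α i) = 2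
  coroot_root_of_eq_six : ∀ i j, M i j = 6 → α' i (α j) * α' j (α i) = 3

namespace IsCrystallographicRealization

variable {M : CoxeterMatrix B} {α : B → V} {α' : B → Dual R V}
  (h : IsCrystallographicRealization M α α')

theorem isLiftable_reflection :
    M.IsLiftable fun i => reflection (h.coroot_root_self i) := by
  intro i j
  have hi := h.coroot_root_self i
  have hj := h.coroot_root_self j
  have hM := h.crystallographic i j
  simp only [Finset.mem_insert, Finset.mem_singleton] at hM
  obtain hM | hM | hM | hM | hM | hM := hM <;> rw [hM]
  · exact pow_zero _
  · obtain rfl : i = j := by_contra fun hij => M.off_diagonal i j hij hM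
    rw [pow_one]
    exact LinearEquiv.ext (involutive_reflection hi)
  · exact reflection_mul_reflection_sq_eq_one hi hj (h.coroot_root_of_eq_two i j hM)
      (h.coroot_root_of_eq_two j i (M.symmetric j i ▸ hM))
  · exact reflection_mul_reflection_pow_three_eq_one hi hj (h.coroot_root_of_eq_three i j hM)
  · exact reflection_mul_reflection_pow_four_eq_one hi hj (h.coroot_root_of_eq_four i j hM)
  · exact reflection_mul_reflection_pow_six_eq_one hi hj (h.coroot_root_of_eq_six i j hM)

variable {G : Type*} [Group G] (cs : CoxeterSystem M G)

/-- The reflection representation of a Coxeter group on a crystallographic realization. -/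
def representation : Representation R G V :=
  (LinearEquiv.automorphismGroup.toLinearMapMonoidHom).comp
    (cs.lift ⟨fun i => reflection (h.coroot_root_self i), h.isLiftable_reflection⟩)

theorem representation_simple (i : B) :
    h.representation cs (cs.simple i) = preReflection (α i) (α' i) := by
  rw [representation, MonoidHom.comp_apply, cs.lift_apply_simple h.isLiftable_reflection]
  rfl

theorem representation_wordProd_apply (ω : List B) (v : V) :
    h.representation cs (cs.wordProd ω) v = ω.foldr (fun i v => v - α' i v • α i) v := by
  induction ω with
  | nil => simp
  | cons i ω ih =>
    rw [cs.wordProd_cons, map_mul, Module.End.mul_apply, ih, h.representation_simple,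
      preReflection_apply, List.foldr_cons]

theorem le_comap_representation {N : Submodule R V} (hN : ∀ i, ∀ v ∈ N, α' i v • α i ∈ N)
    (g : G) : N ≤ N.comap (h.representation cs g) := by
  induction g using cs.simple_induction with
  | simple i =>
    intro v hv
    rw [Submodule.mem_comap, h.representation_simple, preReflection_apply]
    exact N.sub_mem hv (hN i v hv)
  | one => simp [Module.End.one_eq_id]
  | mul g g' hg hg' =>
    intro v hv
    rw [Submodule.mem_comap, map_mul]
    exact hg (hg' hv)

end IsCrystallographicRealization

end ReflectionRepresentation

/-- The generalized Cartan matrix of type [3,3,4,3,3] modulo `4`, with short roots at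
`a, b, c` and long roots at `d, e, f`. -/
def cartan6 : Matrix (Fin 6) (Fin 6) (ZMod 4) :=
  !![ 2, -1,  0,  0,  0,  0;
     -1,  2, -1,  0,  0,  0;
      0, -1,  2, -2,  0,  0;
      0,  0, -1,  2, -1,  0;
      0,  0,  0, -1,  2, -1;
      0,  0,  0,  0, -1,  2]

/-- The simple roots modulo `4`. -/
def simpleRoot (i : Fin 6) : Fin 6 → ZMod 4 := Pi.single i 1

/-- The simple coroots modulo `4`, in coordinates the rows of `cartan6`. -/
def simpleCoroot (i : Fin 6) : Module.Dual (ZMod 4) (Fin 6 → ZMod 4) :=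
  LinearMap.proj i ∘ₗ cartan6.mulVecLin

theorem isCrystallographicRealization_cox6Matrix :
    IsCrystallographicRealization cox6Matrix simpleRoot simpleCoroot := by
  have apply_eq (i j : Fin 6) : cox6Matrix i j = cox6 i j := rfl
  constructor
  case coroot_root_self => decide +kernel
  all_goals
    simp only [apply_eq]
    decide +kernel

/-- Generators of `longRootLattice`: the long simple roots and the doubles of the short ones. -/
def longRootGenerator (i : Fin 6) : Fin 6 → ZMod 4 :=
  (![2, 2, 2, 1, 1, 1] i : ZMod 4) • simpleRoot i

/-- The lattice spanned by the long roots, modulo `4`. It contains the doubles of the short simple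
roots because the reflection in the root of `c` adds twice that root to the root of `d`. -/
def longRootLattice : Submodule (ZMod 4) (Fin 6 → ZMod 4) :=
  Submodule.span (ZMod 4) (Set.range longRootGenerator)

theorem simpleCoroot_smul_simpleRoot_mem_longRootLattice (i : Fin 6) :
    ∀ v ∈ longRootLattice, simpleCoroot i v • simpleRoot i ∈ longRootLattice := by
  intro v hv
  induction hv using Submodule.span_induction with
  | mem v hv =>
    obtain ⟨j, rfl⟩ := hv
    have multiple : ∀ i j : Fin 6, ∃ c : ZMod 4,
        simpleCoroot i (longRootGenerator j) • simpleRoot i = c • longRootGenerator i := by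
      decide +kernel
    obtain ⟨c, hc⟩ := multiple i j
    rw [hc]
    exact Submodule.smul_mem _ c (Submodule.subset_span ⟨i, rfl⟩)
  | zero => simp
  | add v v' _ _ hv hv' => simpa only [map_add, add_smul] using add_mem hv hv'
  | smul r v _ hv => simpa only [map_smul, smul_assoc] using Submodule.smul_mem _ r hv

/-- The reflection representation of `W` on its root lattice modulo `4`. -/
abbrev reflectionRep : Representation (ZMod 4) W (Fin 6 → ZMod 4) :=
  isCrystallographicRealization_cox6Matrix.representation coxeterW

/-- The restriction of `reflectionRep` to the lattice of long roots, on which `facetTranslation ^ 2`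
acts trivially. -/
def longRootRep : Representation (ZMod 4) W longRootLattice :=
  reflectionRep.subrepresentation longRootLattice
    (isCrystallographicRealization_cox6Matrix.le_comap_representation coxeterW
      simpleCoroot_smul_simpleRoot_mem_longRootLattice)

theorem coe_longRootRep_apply (g : W) (v : longRootLattice) :
    (longRootRep g v : Fin 6 → ZMod 4) = reflectionRep g v := rfl

theorem reflectionRep_facetTranslation_sq_longRootGenerator (i : Fin 6) :
    reflectionRep (facetTranslation ^ 2) (longRootGenerator i) = longRootGenerator i := by
  rw [facetTranslation_eq_wordProd, wordProd_pow,
    IsCrystallographicRealization.representation_wordProd_apply]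
  revert i
  decide +kernel

theorem longRootRep_facetTranslation_sq : longRootRep (facetTranslation ^ 2) = 1 := by
  have fixes : Set.EqOn (reflectionRep (facetTranslation ^ 2)) LinearMap.id longRootLattice :=
    LinearMap.eqOn_span <| Set.forall_mem_range.mpr
      reflectionRep_facetTranslation_sq_longRootGenerator
  refine LinearMap.ext fun v => Subtype.ext ?_
  rw [coe_longRootRep_apply]
  exact fixes v.2

theorem longRootRep_vertexTranslation_sq_ne_one : longRootRep (vertexTranslation ^ 2) ≠ 1 := by
  intro h
  have fixes :
      reflectionRep (vertexTranslation ^ 2) (longRootGenerator 4) = longRootGenerator 4 := by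
    rw [← coe_longRootRep_apply _ ⟨longRootGenerator 4, Submodule.subset_span ⟨4, rfl⟩⟩, h]
    rfl
  rw [vertexTranslation_eq_wordProd, wordProd_pow,
    IsCrystallographicRealization.representation_wordProd_apply] at fixes
  revert fixes
  decide +kernel

theorem orderOf_eq_four_of_sq_eq_sq {G : Type*} [Monoid G] {y z : G} (hz : z ^ 2 = y ^ 2)
    (hy : y ^ 2 ≠ 1) (hy' : y ^ 4 = 1) : orderOf z = 4 := by
  refine orderOf_eq_prime_pow (p := 2) (n := 1) ?_ ?_
  · rwa [pow_one, hz]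
  · rw [pow_succ, pow_one, pow_mul, hz, ← pow_mul, hy']

theorem vertexTranslation_sq_notMem_normalClosure :
    vertexTranslation ^ 2 ∉ Subgroup.normalClosure {facetTranslation ^ 2} := by
  have le_ker : Subgroup.normalClosure {facetTranslation ^ 2} ≤ longRootRep.ker :=
    Subgroup.normalClosure_le_normal
      (Set.singleton_subset_iff.mpr longRootRep_facetTranslation_sq)
  exact fun mem => longRootRep_vertexTranslation_sq_ne_one (le_ker mem)

/-- In Theta', the images of f τ σ τ and f τ σ τ σ both have order 4,
identifying the vertex figures as {3,4,3,3}_{(2,2,0,0)}. -/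
theorem stmt_11 :
    orderOf ((QuotientGroup.mk (w 5 * tu * sg * tu) : Theta')) = 4 ∧
    orderOf ((QuotientGroup.mk (w 5 * tu * sg * tu * sg) : Theta')) = 4 := by
  let π : W →* Theta' := QuotientGroup.mk' _
  have facet_relation : π facetTranslation ^ 2 = 1 :=
    (QuotientGroup.eq_one_iff _).mpr (Subgroup.subset_normalClosure rfl)
  have pow_four : π vertexTranslation ^ 4 = 1 := map_vertexTranslation_pow_four facet_relation
  have sq_ne_one : π vertexTranslation ^ 2 ≠ 1 := fun h =>
    vertexTranslation_sq_notMem_normalClosure ((QuotientGroup.eq_one_iff _).mp h)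
  have mul_sg_sq : π (vertexTranslation * sg) ^ 2 = π vertexTranslation ^ 2 := by
    rw [← map_pow, commute_vertexTranslation_sg.mul_pow, sq sg, sg_mul_self, mul_one, map_pow]
  exact ⟨orderOf_eq_four_of_sq_eq_sq rfl sq_ne_one pow_four,
    orderOf_eq_four_of_sq_eq_sq mul_sg_sq sq_ne_one pow_four⟩
end
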